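/- arXiv:0805.1996 — 3 statements merged into one kernel-verified Lean document; each statement's English description precedes it below -/
import Mathlib

section
/- Let n ≥ 1 and let f : [0,1] → ℝ be continuous with f((0,1)) ⊆ (0,∞). Suppose that for all n×n complex matrices A and T such that A is Hermitian with all eigenvalues in (0,1), T*T ≤ 1, and T*AT ≤ A, one has T* f(A) T ≤ f(A). Then for every choice of n points λ₁, …, λₙ ∈ (0,1) there exists a function h : (0,1) → ℝ which is matrix monotone of order k for every k ∈ ℕ (i.e. operator monotone on (0,1)) and satisfies h(λᵢ) = f(λᵢ) for 1 ≤ i ≤ n. -/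
/-!
Let `K` be the set of nonnegative operator monotone functions on `(0, ∞)` with value `1` at a fixed
point; it is convex, and compact for pointwise convergence. If no positive multiple of the vector
`(f(λᵢ))ᵢ` were interpolated by a member of `K`, some functional `c` would be nonnegative on the
functions `x ↦ x / (x + s)`, `s ≥ 0`, and negative on `f`, by the Hahn–Banach theorem.

Nonnegativity on these functions says that `R(s) = ∏ᵢ (λᵢ + s) · ∑ᵢ cᵢ λᵢ / (λᵢ + s)`, a polynomial
of degree less than `n`, is nonnegative on `[0, ∞)`. Then `R` is a sum of polynomials `q²` and
`X q²` of degree less than `n`, so it suffices to show `∑ᵢ cᵢ f(λᵢ) ≥ 0` when `R` is one of these.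
Now `cᵢ = wᵢ R(-λᵢ)` with weights `wᵢ` alternating in sign, so that the values of `q` at the nodes
with `cᵢ > 0` determine `q`. Suitably rescaled, the map from these values to the others is a matrix
`T`. For `A = diag(λᵢ)`, the inequalities `T* T ≤ 1` and `T* A T ≤ A` amount to
`∑ᵢ cᵢ = R(0) / ∏ᵢ λᵢ ≥ 0` and `∑ᵢ cᵢ λᵢ ≥ 0` for all such `R`, the last sum being the coefficient
of `Xⁿ⁻¹` in `R`, and `T* f(A) T ≤ f(A)` amounts to `∑ᵢ cᵢ f(λᵢ) ≥ 0`.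
-/

open Matrix Set MeasureTheory
open scoped ComplexOrder

/-- `f` is matrix monotone of order `n` on the set `I ⊆ ℝ`: for all `n × n` Hermitian complex
matrices `A, B` with spectra contained in `I`, `A ≤ B` in the Loewner order (i.e. `B - A` is
positive semidefinite) implies `f(A) ≤ f(B)`, where `f(A)` is given by the continuous functional
calculus (applying `f` to the eigenvalues in a spectral decomposition). -/
def MatrixMonotoneOn (n : ℕ) (f : ℝ → ℝ) (I : Set ℝ) : Prop :=
  ∀ A B : Matrix (Fin n) (Fin n) ℂ, A.IsHermitian → B.IsHermitian →
    spectrum ℝ A ⊆ I → spectrum ℝ B ⊆ I → (B - A).PosSemidef →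
    (cfc f B - cfc f A).PosSemidef

/-- `f` is matrix convex of order `n` on the set `I ⊆ ℝ`: for all `n × n` Hermitian complex
matrices `A, B` with spectra contained in `I` and all `l ∈ [0,1]`,
`f(l•A + (1-l)•B) ≤ l•f(A) + (1-l)•f(B)` in the Loewner order. -/
def MatrixConvexOn (n : ℕ) (f : ℝ → ℝ) (I : Set ℝ) : Prop :=
  ∀ A B : Matrix (Fin n) (Fin n) ℂ, A.IsHermitian → B.IsHermitian →
    spectrum ℝ A ⊆ I → spectrum ℝ B ⊆ I → ∀ l : ℝ, 0 ≤ l → l ≤ 1 →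
    (l • cfc f A + (1 - l) • cfc f B - cfc f (l • A + (1 - l) • B)).PosSemidef

section CStarAlgebra

variable {A : Type*} [CStarAlgebra A] [PartialOrder A] [StarOrderedRing A] {a b : A} {s : ℝ}

theorem cfc_div_add_const_eq (hs : 0 ≤ s) (ha : IsStrictlyPositive a) :
    cfc (fun x : ℝ => x / (x + s)) a = 1 - s • Ring.inverse (a + algebraMap ℝ A s) := by
  have hpos (x : ℝ) (hx : x ∈ spectrum ℝ a) : 0 < x := by grind
  have hne (x : ℝ) (hx : x ∈ spectrum ℝ a) : x + s ≠ 0 :=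
    (add_pos_of_pos_of_nonneg (hpos x hx) hs).ne'
  have hc : ContinuousOn (fun x : ℝ => (x + s)⁻¹) (spectrum ℝ a) := by
    fun_prop (disch := assumption)
  calc cfc (fun x : ℝ => x / (x + s)) a
      = cfc (fun x : ℝ => 1 - s * (x + s)⁻¹) a := cfc_congr fun x hx => by
        have := hne x hx
        field_simp
        ring
    _ = 1 - s • Ring.inverse (a + algebraMap ℝ A s) := by
        rw [cfc_sub _ (fun x => s * (x + s)⁻¹) a continuousOn_const (by exact hc.const_mul s),
          cfc_const_one .., cfc_const_mul s _ a hc, cfc_inv _ a hne (by fun_prop),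
          cfc_add_const s _ a, cfc_id' ..]

theorem cfc_div_add_const_mono (hs : 0 ≤ s) (ha : IsStrictlyPositive a) (hab : a ≤ b) :
    cfc (fun x : ℝ => x / (x + s)) a ≤ cfc (fun x : ℝ => x / (x + s)) b := by
  rw [cfc_div_add_const_eq hs ha, cfc_div_add_const_eq hs (ha.of_le hab)]
  have : IsStrictlyPositive (a + algebraMap ℝ A s) := ha.add_nonneg (algebraMap_nonneg A hs)
  gcongr

end CStarAlgebra

namespace MatrixMonotoneOn

variable {k : ℕ} {g h : ℝ → ℝ} {I J : Set ℝ}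

theorem mono (hh : MatrixMonotoneOn k h J) (hIJ : I ⊆ J) : MatrixMonotoneOn k h I :=
  fun A B hA hB hsA hsB => hh A B hA hB (hsA.trans hIJ) (hsB.trans hIJ)

theorem congr (hh : MatrixMonotoneOn k h I) (hgh : EqOn g h I) : MatrixMonotoneOn k g I := by
  intro A B hA hB hsA hsB hAB
  rw [cfc_congr (hgh.mono hsA), cfc_congr (hgh.mono hsB)]
  exact hh A B hA hB hsA hsB hAB

theorem add (hg : MatrixMonotoneOn k g I) (hh : MatrixMonotoneOn k h I) :
    MatrixMonotoneOn k (g + h) I := by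
  intro A B hA hB hsA hsB hAB
  have cfc_sum (M : Matrix (Fin k) (Fin k) ℂ) : cfc (g + h) M = cfc g M + cfc h M :=
    cfc_add M g h (finite_real_spectrum.continuousOn g) (finite_real_spectrum.continuousOn h)
  rw [cfc_sum, cfc_sum, add_sub_add_comm]
  exact (hg A B hA hB hsA hsB hAB).add (hh A B hA hB hsA hsB hAB)

theorem const_smul {c : ℝ} (hh : MatrixMonotoneOn k h I) (hc : 0 ≤ c) :
    MatrixMonotoneOn k (c • h) I := by
  intro A B hA hB hsA hsB hAB
  have cfc_const_smul (M : Matrix (Fin k) (Fin k) ℂ) : cfc (c • h) M = c • cfc h M :=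
    cfc_smul c h M (finite_real_spectrum.continuousOn h)
  rw [cfc_const_smul, cfc_const_smul, ← smul_sub]
  exact (hh A B hA hB hsA hsB hAB).smul hc

end MatrixMonotoneOn

open scoped MatrixOrder Matrix.Norms.L2Operator in
theorem matrixMonotoneOn_div_add_const (k : ℕ) {s : ℝ} (hs : 0 ≤ s) :
    MatrixMonotoneOn k (fun x => x / (x + s)) (Ioi 0) := by
  intro A B hA _ hsA _ hAB
  rw [← Matrix.le_iff] at hAB ⊢
  refine cfc_div_add_const_mono hs ?_ hAB
  exact (StarOrderedRing.isStrictlyPositive_iff_spectrum_pos A hA.isSelfAdjoint).2 hsA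

theorem continuous_cfc_of_isHermitian {m : Type*} [Fintype m] [DecidableEq m] {M : Matrix m m ℂ}
    (hM : M.IsHermitian) : Continuous fun h : ℝ → ℝ => cfc h M := by
  simp only [hM.cfc_eq, IsHermitian.cfc, Unitary.conjStarAlgAut_apply]
  fun_prop

open scoped MatrixOrder Matrix.Norms.L2Operator in
theorem isClosed_setOf_matrixMonotoneOn (k : ℕ) (I : Set ℝ) :
    IsClosed {h | MatrixMonotoneOn k h I} := by
  simp only [MatrixMonotoneOn, ofPred_forall, ← Matrix.le_iff]
  refine isClosed_iInter fun A => isClosed_iInter fun B => isClosed_iInter fun hA =>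
    isClosed_iInter fun hB => ?_
  repeat refine isClosed_iInter fun _ => ?_
  exact isClosed_le (continuous_cfc_of_isHermitian hA) (continuous_cfc_of_isHermitian hB)

/-- `h` is operator monotone on `I`: matrix monotone of every order. -/
def OperatorMonotoneOn (h : ℝ → ℝ) (I : Set ℝ) : Prop :=
  ∀ k, MatrixMonotoneOn k h I

theorem OperatorMonotoneOn.mono {h : ℝ → ℝ} {I J : Set ℝ} (hh : OperatorMonotoneOn h J)
    (hIJ : I ⊆ J) : OperatorMonotoneOn h I :=
  fun k => (hh k).mono hIJ

theorem isClosed_setOf_operatorMonotoneOn (I : Set ℝ) :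
    IsClosed {h | OperatorMonotoneOn h I} := by
  simp only [OperatorMonotoneOn, ofPred_forall]
  exact isClosed_iInter fun k => isClosed_setOf_matrixMonotoneOn k I

theorem convex_setOf_operatorMonotoneOn (I : Set ℝ) :
    Convex ℝ {h | OperatorMonotoneOn h I} :=
  fun _ hg _ hh _ _ ha hb _ k => ((hg k).const_smul ha).add ((hh k).const_smul hb)

/-- The nonnegative operator monotone functions on `(0, ∞)` with value `1` at `a`. Such a function
is bounded by `max 1 (x / a)` on `(0, ∞)`; the bound is part of the definition, and is imposed at
all `x`, so that Tychonoff's theorem gives compactness. -/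
def normalizedOperatorMonotone (a : ℝ) : Set (ℝ → ℝ) :=
  {h | OperatorMonotoneOn h (Ioi 0)} ∩ {h | h a = 1} ∩ univ.pi fun x => Icc 0 (max 1 (x / a))

theorem isCompact_normalizedOperatorMonotone (a : ℝ) :
    IsCompact (normalizedOperatorMonotone a) :=
  (isCompact_univ_pi fun _ => isCompact_Icc).inter_left
    ((isClosed_setOf_operatorMonotoneOn _).inter
      (isClosed_eq (continuous_apply a) continuous_const))

theorem convex_normalizedOperatorMonotone (a : ℝ) :
    Convex ℝ (normalizedOperatorMonotone a) :=
  ((convex_setOf_operatorMonotoneOn _).inter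
      (convex_singleton (𝕜 := ℝ) (1 : ℝ) |>.is_linear_preimage (LinearMap.proj a).isLinear)).inter
    (convex_pi fun _ _ => convex_Icc _ _)

theorem add_div_mul_div_add_le_max {a s x : ℝ} (ha : 0 < a) (hs : 0 ≤ s) (hx : 0 < x) :
    (a + s) / a * (x / (x + s)) ≤ max 1 (x / a) := by
  rw [le_max_iff, div_mul_div_comm]
  refine (le_total x a).imp (fun hxa => ?_) fun hax => ?_
  · rw [div_le_one (by positivity)]
    nlinarith
  · rw [div_le_div_iff₀ (by positivity) ha]
    nlinarith [mul_nonneg (mul_nonneg ha.le hx.le) (sub_nonneg.2 hax)]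

theorem exists_mem_normalizedOperatorMonotone_eqOn {a s : ℝ} (ha : 0 < a) (hs : 0 ≤ s) :
    ∃ h ∈ normalizedOperatorMonotone a,
      EqOn h (fun x => (a + s) / a * (x / (x + s))) (Ioi 0) := by
  have heq : EqOn ((Ioi 0).indicator fun x => (a + s) / a * (x / (x + s)))
      (fun x => (a + s) / a * (x / (x + s))) (Ioi 0) := fun x hx => indicator_of_mem hx _
  refine ⟨_, ⟨⟨fun k => ?_, ?_⟩, fun x _ => ?_⟩, heq⟩
  · exact ((matrixMonotoneOn_div_add_const k hs).const_smul (by positivity)).congr heq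
  · rw [mem_ofPred_eq, heq ha]
    field_simp
  · rcases le_or_gt x 0 with hx | hx
    · simp [indicator_of_notMem (notMem_Ioi.2 hx)]
    rw [heq hx]
    refine ⟨?_, add_div_mul_div_add_le_max ha hs hx⟩
    have : 0 < x := hx
    positivity

theorem mem_of_forall_dual_nonneg {E : Type*} [AddCommGroup E] [TopologicalSpace E]
    [IsTopologicalAddGroup E] [Module ℝ E] [ContinuousSMul ℝ E] [LocallyConvexSpace ℝ E]
    {C : Set E} (hconv : Convex ℝ C) (hclosed : IsClosed C) {φ₀ : StrongDual ℝ E} {x : E}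
    (hC : ∀ y ∈ C, φ₀ y = 1) (hx : φ₀ x = 1)
    (hdual : ∀ φ : StrongDual ℝ E, (∀ y ∈ C, 0 ≤ φ y) → 0 ≤ φ x) : x ∈ C := by
  by_contra hxC
  obtain ⟨φ, u, hφC, hφx⟩ := geometric_hahn_banach_closed_point hconv hclosed hxC
  have h := hdual (u • φ₀ - φ) fun y hy => by simpa [hC y hy] using (hφC y hy).le
  have : φ x ≤ u := by simpa [hx] using h
  exact hφx.not_ge this

theorem sum_mul_div_add_nonneg {ι : Type*} [Fintype ι] {lam c : ι → ℝ} {a s : ℝ} (ha : 0 < a)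
    (hlam : ∀ i, 0 < lam i)
    (hc : ∀ h ∈ normalizedOperatorMonotone a, 0 ≤ ∑ i, c i * h (lam i)) (hs : 0 ≤ s) :
    0 ≤ ∑ i, c i * (lam i / (lam i + s)) := by
  obtain ⟨h, hmem, heq⟩ := exists_mem_normalizedOperatorMonotone_eqOn ha hs
  have hscale : ∑ i, c i * h (lam i) = (a + s) / a * ∑ i, c i * (lam i / (lam i + s)) := by
    rw [Finset.mul_sum]
    exact Finset.sum_congr rfl fun i _ => by rw [heq (hlam i), mul_left_comm]
  exact nonneg_of_mul_nonneg_right (hscale ▸ hc h hmem) (by positivity)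

theorem exists_operatorMonotoneOn_interpolating {ι : Type*} [Fintype ι] {lam F : ι → ℝ}
    (hlam : ∀ i, 0 < lam i) (hF : ∀ i, 0 < F i)
    (hdual : ∀ c : ι → ℝ, (∀ s, 0 ≤ s → 0 ≤ ∑ i, c i * (lam i / (lam i + s))) →
      0 ≤ ∑ i, c i * F i) :
    ∃ h, OperatorMonotoneOn h (Ioi 0) ∧ ∀ i, h (lam i) = F i := by
  classical
  obtain _ | ⟨⟨i₀⟩⟩ := isEmpty_or_nonempty ι
  · exact ⟨_, (matrixMonotoneOn_div_add_const · le_rfl), isEmptyElim⟩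
  let restrict : (ℝ → ℝ) →L[ℝ] (ι → ℝ) := .pi fun i => .proj (lam i)
  let C := restrict '' normalizedOperatorMonotone (lam i₀)
  have hC : IsCompact C :=
    (isCompact_normalizedOperatorMonotone _).image restrict.continuous
  suffices (F i₀)⁻¹ • F ∈ C by
    obtain ⟨h, ⟨⟨hmono, -⟩, -⟩, hres⟩ := this
    refine ⟨F i₀ • h, fun k => (hmono k).const_smul (hF i₀).le, fun i => ?_⟩
    have : h (lam i) = (F i₀)⁻¹ * F i := congrFun hres i
    simp [this, (hF i₀).ne']
  refine mem_of_forall_dual_nonneg (φ₀ := .proj i₀)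
    ((convex_normalizedOperatorMonotone _).linear_image restrict.toLinearMap) hC.isClosed ?_ ?_ ?_
  · rintro _ ⟨h, ⟨⟨-, hone⟩, -⟩, rfl⟩
    exact hone
  · simp [(hF i₀).ne']
  · intro φ hφ
    obtain ⟨c, hc⟩ : ∃ c : ι → ℝ, ∀ y, φ y = ∑ i, c i * y i :=
      ⟨fun i => φ fun j => if i = j then 1 else 0, fun y => by
        simpa [mul_comm] using LinearMap.pi_apply_eq_sum_univ φ.toLinearMap y⟩
    rw [map_smul, smul_eq_mul, hc]
    refine mul_nonneg (inv_nonneg.2 (hF i₀).le) (hdual c fun s hs => ?_)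
    refine sum_mul_div_add_nonneg (hlam i₀) hlam (fun h hh => ?_) hs
    rw [← hc fun i => h (lam i)]
    exact hφ _ ⟨h, hh, rfl⟩

section HalfLine

open Polynomial

/-- The sums of polynomials `q²` and `X q²`, each summand of degree less than `n`. The generators
are written `m q²` with `m ∈ {1, X}`, so that both kinds can be treated at once. -/
noncomputable def halfLineSOS (n : ℕ) : AddSubmonoid ℝ[X] :=
  .closure {p | ∃ m q : ℝ[X], (m = 1 ∨ m = X) ∧ m.natDegree + 2 * q.natDegree < n ∧ p = m * q ^ 2}

theorem halfLineSOS_mono : Monotone halfLineSOS := fun _ _ hnk =>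
  AddSubmonoid.closure_mono fun _ ⟨m, q, hm, hdeg, hp⟩ => ⟨m, q, hm, hdeg.trans_le hnk, hp⟩

theorem C_mem_halfLineSOS {c : ℝ} (hc : 0 ≤ c) : C c ∈ halfLineSOS 1 := by
  refine AddSubmonoid.subset_closure ⟨1, C √c, .inl rfl, by simp, ?_⟩
  rw [one_mul, ← C_pow, Real.sq_sqrt hc]

theorem X_mul_mem_halfLineSOS {n : ℕ} {p : ℝ[X]} (hp : p ∈ halfLineSOS n) :
    X * p ∈ halfLineSOS (n + 1) := by
  induction hp using AddSubmonoid.closure_induction with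
  | mem p hp =>
    obtain ⟨m, q, rfl | rfl, hdeg, rfl⟩ := hp
    · refine AddSubmonoid.subset_closure ⟨X, q, .inr rfl, ?_, by ring⟩
      rw [natDegree_one] at hdeg
      rw [natDegree_X]
      omega
    · refine AddSubmonoid.subset_closure ⟨1, X * q, .inl rfl, ?_, by ring⟩
      have := natDegree_mul_le (p := X) (q := q)
      rw [natDegree_X] at hdeg this
      rw [natDegree_one]
      omega
  | zero => simp
  | add p q _ _ hp hq => simpa only [mul_add] using add_mem hp hq

theorem sq_mul_mem_halfLineSOS {n : ℕ} {p : ℝ[X]} (r : ℝ[X]) (hp : p ∈ halfLineSOS n) :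
    r ^ 2 * p ∈ halfLineSOS (n + 2 * r.natDegree) := by
  induction hp using AddSubmonoid.closure_induction with
  | mem p hp =>
    obtain ⟨m, q, hm, hdeg, rfl⟩ := hp
    refine AddSubmonoid.subset_closure ⟨m, r * q, hm, ?_, by ring⟩
    have := natDegree_mul_le (p := r) (q := q)
    omega
  | zero => simp
  | add p q _ _ hp hq => simpa only [mul_add] using add_mem hp hq

theorem leadingCoeff_nonneg_of_forall_eval_nonneg {p : ℝ[X]} (hp : ∀ x, 0 ≤ x → 0 ≤ p.eval x) :
    0 ≤ p.leadingCoeff := by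
  by_contra! hlead
  obtain hdeg | hdeg := le_or_gt p.degree 0
  · rw [eq_C_of_degree_le_zero hdeg, leadingCoeff_C] at hlead
    rw [coeff_zero_eq_eval_zero] at hlead
    exact hlead.not_ge (hp 0 le_rfl)
  · have hneg := (p.tendsto_atBot_of_leadingCoeff_nonpos hdeg hlead.le).eventually_lt_atBot 0
    obtain ⟨x, hx, hx₀⟩ := (hneg.and (Filter.eventually_ge_atTop 0)).exists
    exact hx.not_ge (hp x hx₀)

theorem eval_nonneg_of_mul_eval_nonneg {a q : ℝ[X]} (ha₀ : a ≠ 0)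
    (ha : ∀ x, 0 ≤ x → 0 ≤ a.eval x) (haq : ∀ x, 0 ≤ x → 0 ≤ (a * q).eval x) (x : ℝ)
    (hx : 0 ≤ x) : 0 ≤ q.eval x := by
  by_contra! hneg
  have hq : ∀ᶠ y in nhdsWithin x (Ioi x), q.eval y < 0 :=
    (q.continuous.tendsto x).mono_left nhdsWithin_le_nhds |>.eventually_lt_const hneg
  have hroot : ∀ᶠ y in nhdsWithin x (Ioi x), a.eval y ≠ 0 :=
    (nhdsGT_le_nhdsNE x).trans (nhdsNE_le_cofinite x)
      (finite_setOfPred_isRoot ha₀).eventually_cofinite_notMem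
  obtain ⟨y, ⟨hqy, hay⟩, hxy⟩ := ((hq.and hroot).and self_mem_nhdsWithin).exists
  have hy : 0 ≤ y := hx.trans (le_of_lt hxy)
  refine (haq y hy).not_gt ?_
  rw [eval_mul]
  exact mul_neg_of_pos_of_neg ((ha y hy).lt_of_ne' hay) hqy

theorem exists_forall_eval_le_of_forall_eval_nonneg {p : ℝ[X]}
    (hp : ∀ x, 0 ≤ x → 0 ≤ p.eval x) : ∃ r, 0 ≤ r ∧ ∀ x, 0 ≤ x → p.eval r ≤ p.eval x := by
  obtain ⟨y, hy⟩ := (p.comp (X ^ 2)).exists_forall_norm_le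
  refine ⟨y ^ 2, sq_nonneg y, fun x hx => ?_⟩
  simpa [abs_of_nonneg, hp, sq_nonneg, hx] using hy √x

theorem sq_X_sub_C_dvd_sub_C_of_forall_eval_le {p : ℝ[X]} {r : ℝ} (hr : 0 < r)
    (hmin : ∀ x, 0 ≤ x → p.eval r ≤ p.eval x) : (X - C r) ^ 2 ∣ p - C (p.eval r) := by
  obtain hzero | hne := eq_or_ne (p - C (p.eval r)) 0
  · exact hzero ▸ dvd_zero _
  have hderiv : p.derivative.eval r = 0 := by
    rw [← Polynomial.deriv]
    refine IsLocalMin.deriv_eq_zero ?_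
    filter_upwards [lt_mem_nhds hr] with x hx using hmin x hx.le
  exact (le_rootMultiplicity_iff hne).1
    ((one_lt_rootMultiplicity_iff_isRoot hne).2 (by simp [IsRoot, hderiv]))

theorem exists_monic_dvd_sub_C_of_forall_eval_le {p : ℝ[X]} {r : ℝ} (hr : 0 ≤ r)
    (hmin : ∀ x, 0 ≤ x → p.eval r ≤ p.eval x) :
    ∃ a : ℝ[X], a.Monic ∧ 0 < a.natDegree ∧ (∀ x, 0 ≤ x → 0 ≤ a.eval x) ∧
      (∀ n, ∀ q ∈ halfLineSOS n, a * q ∈ halfLineSOS (n + a.natDegree)) ∧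
      a ∣ p - C (p.eval r) := by
  obtain rfl | hr := hr.eq_or_lt
  · refine ⟨X, monic_X, by simp, by simp, fun n q hq => ?_, ?_⟩
    · simpa only [natDegree_X] using X_mul_mem_halfLineSOS hq
    · simp [X_dvd_iff, coeff_zero_eq_eval_zero]
  · refine ⟨(X - C r) ^ 2, (monic_X_sub_C r).pow 2, by simp, fun x _ => ?_, fun n q hq => ?_,
      sq_X_sub_C_dvd_sub_C_of_forall_eval_le hr hmin⟩
    · simpa using sq_nonneg (x - r)
    · simpa only [natDegree_pow] using sq_mul_mem_halfLineSOS (X - C r) hq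

theorem mem_halfLineSOS_of_forall_eval_nonneg {p : ℝ[X]} (hp : ∀ x, 0 ≤ x → 0 ≤ p.eval x) :
    p ∈ halfLineSOS (p.natDegree + 1) := by
  induction hn : p.natDegree using Nat.strong_induction_on generalizing p with
  | _ n ih =>
  subst hn
  obtain ⟨r, hr, hmin⟩ := exists_forall_eval_le_of_forall_eval_nonneg hp
  obtain ⟨a, hmonic, hdeg, hpos, hmul, q, hq⟩ := exists_monic_dvd_sub_C_of_forall_eval_le hr hmin
  have hmin_mem : C (p.eval r) ∈ halfLineSOS (p.natDegree + 1) :=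
    halfLineSOS_mono (by omega) (C_mem_halfLineSOS (hp r hr))
  suffices a * q ∈ halfLineSOS (p.natDegree + 1) by
    simpa only [← hq, sub_add_cancel] using add_mem this hmin_mem
  obtain rfl | hq₀ := eq_or_ne q 0
  · simp
  have hq_nonneg : ∀ x, 0 ≤ x → 0 ≤ q.eval x :=
    eval_nonneg_of_mul_eval_nonneg hmonic.ne_zero hpos fun x hx => by
      rw [← hq, eval_sub, eval_C, sub_nonneg]
      exact hmin x hx
  have hdeg_p : p.natDegree = q.natDegree + a.natDegree := by
    rw [← natDegree_sub_C, hq, hmonic.natDegree_mul' hq₀, add_comm]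
  rw [hdeg_p, add_right_comm]
  exact hmul _ _ (ih q.natDegree (by omega) hq_nonneg rfl)

end HalfLine

theorem posSemidef_map_ofReal_iff {m : Type*} [Finite m] {M : Matrix m m ℝ} :
    (M.map Complex.ofReal).PosSemidef ↔ M.PosSemidef := by
  have := Fintype.ofFinite m
  classical
  refine ⟨fun h => ?_, fun h => ?_⟩
  · have hherm : M.IsHermitian :=
      (isHermitian_map_iff (fun x => (Complex.conj_ofReal x).symm) Complex.ofReal_injective).1 h.1
    refine .of_dotProduct_mulVec_nonneg hherm fun u => ?_
    have key : star (fun i => (u i : ℂ)) ⬝ᵥ (M.map Complex.ofReal *ᵥ fun i => (u i : ℂ)) =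
        ((star u ⬝ᵥ M *ᵥ u : ℝ) : ℂ) := by
      simp [dotProduct, mulVec]
    exact Complex.zero_le_real.1 (key ▸ h.dotProduct_mulVec_nonneg fun i => (u i : ℂ))
  · open scoped MatrixOrder in
    obtain ⟨B, rfl⟩ := CStarAlgebra.nonneg_iff_eq_star_mul_self.1 h.nonneg
    convert posSemidef_conjTranspose_mul_self (B.map Complex.ofReal)
    ext i j
    simp [mul_apply, star_eq_conjTranspose]

section Diagonal

variable {m : Type*} [Fintype m] [DecidableEq m]

theorem spectrum_diagonal_ofReal (d : m → ℝ) :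
    spectrum ℝ (diagonal fun i => (d i : ℂ)) = range d := by
  ext r
  rw [← spectrum.algebraMap_mem_iff ℂ, spectrum_diagonal]
  simp

theorem cfc_diagonal_ofReal (f : ℝ → ℝ) (d : m → ℝ) :
    cfc f (diagonal fun i => (d i : ℂ)) = diagonal fun i => (f (d i) : ℂ) := by
  let P := Lagrange.interpolate (Finset.univ.image d) id f
  have hP (i : m) : P.eval (d i) = f (d i) :=
    Lagrange.eval_interpolate_at_node f Function.injective_id.injOn
      (Finset.mem_image_of_mem d (Finset.mem_univ i))
  have hherm : (diagonal fun i => (d i : ℂ)).IsHermitian :=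
    isHermitian_diagonal_iff.2 fun i => Complex.conj_ofReal (d i)
  calc cfc f (diagonal fun i => (d i : ℂ))
      = cfc P.eval (diagonal fun i => (d i : ℂ)) := cfc_congr <| by
        rw [spectrum_diagonal_ofReal]
        exact forall_mem_range.2 fun i => (hP i).symm
    _ = Polynomial.aeval (diagonalAlgHom ℝ fun i => (d i : ℂ)) P :=
        cfc_polynomial P _ hherm.isSelfAdjoint
    _ = diagonal fun i => (f (d i) : ℂ) := by
        rw [Polynomial.aeval_algHom_apply, diagonalAlgHom_apply]
        congr 1
        ext1 i
        rw [Polynomial.aeval_pi_apply, ← hP]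
        exact Polynomial.aeval_algebraMap_apply (R := ℝ) (A := ℝ) ℂ (d i) P

theorem posSemidef_diagonal_sub_iff (D : m → ℝ) (T : Matrix m m ℝ) :
    (diagonal D - Tᵀ * diagonal D * T).PosSemidef ↔
      ∀ u, ∑ i, D i * (T *ᵥ u) i ^ 2 ≤ ∑ i, D i * u i ^ 2 := by
  have hherm : (diagonal D - Tᵀ * diagonal D * T).IsHermitian :=
    (isHermitian_diagonal D).sub (isHermitian_conjTranspose_mul_mul T (isHermitian_diagonal D))
  have form (u : m → ℝ) : u ⬝ᵥ (diagonal D - Tᵀ * diagonal D * T) *ᵥ u =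
      ∑ i, D i * u i ^ 2 - ∑ i, D i * (T *ᵥ u) i ^ 2 := by
    have diag (v : m → ℝ) : v ⬝ᵥ diagonal D *ᵥ v = ∑ i, D i * v i ^ 2 :=
      Finset.sum_congr rfl fun i _ => by rw [mulVec_diagonal]; ring
    rw [sub_mulVec, dotProduct_sub, diag, ← diag (T *ᵥ u), mul_assoc, ← mulVec_mulVec,
      ← mulVec_mulVec, dotProduct_mulVec u Tᵀ, vecMul_transpose]
  rw [posSemidef_iff_dotProduct_mulVec, and_iff_right hherm]
  simp only [star_trivial, form, sub_nonneg]

theorem posSemidef_diagonal_ofReal_sub_iff (D : m → ℝ) (T : Matrix m m ℝ) :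
    (diagonal (fun i => (D i : ℂ)) - (T.map Complex.ofReal)ᴴ * diagonal (fun i => (D i : ℂ)) *
      T.map Complex.ofReal).PosSemidef ↔
      ∀ u, ∑ i, D i * (T *ᵥ u) i ^ 2 ≤ ∑ i, D i * u i ^ 2 := by
  rw [← posSemidef_diagonal_sub_iff, ← posSemidef_map_ofReal_iff]
  congr! 1
  ext i j
  simp [mul_apply, diagonal_apply, apply_ite]

end Diagonal

/-- Condition (3) on a set `I`: `T* T ≤ 1` and `T* A T ≤ A` imply `T* f(A) T ≤ f(A)` for `n × n`
matrices with `A` Hermitian and the spectrum of `A` in `I`. These are the exact interpolation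
functions of order `n` of Foiaş and Lions. -/
def IsInterpolationFunctionOn (n : ℕ) (f : ℝ → ℝ) (I : Set ℝ) : Prop :=
  ∀ A T : Matrix (Fin n) (Fin n) ℂ, A.IsHermitian → spectrum ℝ A ⊆ I →
    (1 - Tᴴ * T).PosSemidef → (A - Tᴴ * A * T).PosSemidef →
    (cfc f A - Tᴴ * cfc f A * T).PosSemidef

/-- `W w` is `w / √v` on `P`, and `T w` is `√(-v) · S (W w)` off `P` and zero on `P`. -/
theorem exists_matrix_sq_sub_mulVec_sq {m : Type*} [Fintype m] [DecidableEq m] {P : Finset m}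
    {S : (P → ℝ) →ₗ[ℝ] (m → ℝ)} (hS : ∀ (u : P → ℝ) (j : P), S u j = u j) {v : m → ℝ}
    (hv_pos : ∀ i ∈ P, 0 < v i) (hv_nonpos : ∀ i ∉ P, v i ≤ 0) :
    ∃ (T : Matrix m m ℝ) (W : (m → ℝ) → P → ℝ),
      (∀ w i, w i ^ 2 - (T *ᵥ w) i ^ 2 = v i * S (W w) i ^ 2 + if i ∈ P then 0 else w i ^ 2) ∧
      ∀ u, ∃ w, W w = u ∧ ∀ i ∉ P, w i = 0 := by
  let W : (m → ℝ) →ₗ[ℝ] (P → ℝ) := .pi fun j => (√(v j))⁻¹ • .proj (j : m)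
  refine ⟨LinearMap.toMatrix' <| .pi fun i => if i ∈ P then 0 else √(-v i) • .proj i ∘ₗ S ∘ₗ W, W,
    fun w i => ?_, fun u => ⟨fun j => if h : j ∈ P then √(v j) * u ⟨j, h⟩ else 0, ?_, ?_⟩⟩
  · rw [LinearMap.toMatrix'_mulVec, LinearMap.pi_apply]
    split_ifs with hi
    · have hSW : S (W w) i = (√(v i))⁻¹ * w i := hS _ ⟨i, hi⟩
      have hv₀ := (hv_pos i hi).ne'
      simp [hSW, mul_pow, Real.sq_sqrt (hv_pos i hi).le, hv₀]
    · simp [mul_pow, Real.sq_sqrt (neg_nonneg.2 (hv_nonpos i hi))]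
      ring
  · ext j
    have := (Real.sqrt_pos.2 (hv_pos j j.2)).ne'
    simp [W, this]
  · exact fun i hi => dif_neg hi

namespace IsInterpolationFunctionOn

variable {n : ℕ} {f : ℝ → ℝ} {I : Set ℝ} {lam : Fin n → ℝ}

theorem sum_mul_mulVec_sq_le (hf : IsInterpolationFunctionOn n f I) (hlam : ∀ i, lam i ∈ I)
    (T : Matrix (Fin n) (Fin n) ℝ) (hcontr : ∀ u, ∑ i, (T *ᵥ u) i ^ 2 ≤ ∑ i, u i ^ 2)
    (hlamcontr : ∀ u, ∑ i, lam i * (T *ᵥ u) i ^ 2 ≤ ∑ i, lam i * u i ^ 2) (u : Fin n → ℝ) :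
    ∑ i, f (lam i) * (T *ᵥ u) i ^ 2 ≤ ∑ i, f (lam i) * u i ^ 2 := by
  have hone := (posSemidef_diagonal_ofReal_sub_iff (fun _ => 1) T).2 (by simpa using hcontr)
  have hA : (diagonal fun i => (lam i : ℂ)).IsHermitian :=
    isHermitian_diagonal_iff.2 fun i => Complex.conj_ofReal (lam i)
  have hspec : spectrum ℝ (diagonal fun i => (lam i : ℂ)) ⊆ I :=
    spectrum_diagonal_ofReal lam ▸ range_subset_iff.2 hlam
  have hfA := hf _ (T.map Complex.ofReal) hA hspec (by simpa using hone)
    ((posSemidef_diagonal_ofReal_sub_iff lam T).2 hlamcontr)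
  rw [cfc_diagonal_ofReal] at hfA
  exact (posSemidef_diagonal_ofReal_sub_iff (fun i => f (lam i)) T).1 hfA u

theorem sum_mul_extension_sq_nonneg (hf : IsInterpolationFunctionOn n f I)
    (hlam : ∀ i, lam i ∈ I) (hlam₀ : ∀ i, 0 ≤ lam i) {P : Finset (Fin n)}
    {S : (P → ℝ) →ₗ[ℝ] (Fin n → ℝ)} (hS : ∀ (u : P → ℝ) (j : P), S u j = u j) {v : Fin n → ℝ}
    (hv_pos : ∀ i ∈ P, 0 < v i) (hv_nonpos : ∀ i ∉ P, v i ≤ 0)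
    (hsum : ∀ u, 0 ≤ ∑ i, v i * S u i ^ 2) (hlamsum : ∀ u, 0 ≤ ∑ i, lam i * (v i * S u i ^ 2))
    (u : P → ℝ) : 0 ≤ ∑ i, f (lam i) * (v i * S u i ^ 2) := by
  obtain ⟨T, W, hT, hW⟩ := exists_matrix_sq_sub_mulVec_sq hS hv_pos hv_nonpos
  have hsumT (D w : Fin n → ℝ) : ∑ i, D i * w i ^ 2 - ∑ i, D i * (T *ᵥ w) i ^ 2 =
      ∑ i, D i * (v i * S (W w) i ^ 2) + ∑ i, D i * if i ∈ P then 0 else w i ^ 2 := by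
    rw [← Finset.sum_sub_distrib, ← Finset.sum_add_distrib]
    exact Finset.sum_congr rfl fun i _ => by rw [← mul_sub, hT, mul_add]
  have contraction {D : Fin n → ℝ} (hD : ∀ i, 0 ≤ D i)
      (hDS : ∀ u, 0 ≤ ∑ i, D i * (v i * S u i ^ 2)) (w : Fin n → ℝ) :
      ∑ i, D i * (T *ᵥ w) i ^ 2 ≤ ∑ i, D i * w i ^ 2 := by
    rw [← sub_nonneg, hsumT]
    exact add_nonneg (hDS _) (Finset.sum_nonneg fun i _ => mul_nonneg (hD i) (by positivity))
  have hcontr (w : Fin n → ℝ) : ∑ i, (T *ᵥ w) i ^ 2 ≤ ∑ i, w i ^ 2 := by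
    simpa only [one_mul] using
      contraction (D := fun _ => 1) (fun _ => zero_le_one) (by simpa only [one_mul] using hsum) w
  obtain ⟨w, rfl, hw⟩ := hW u
  have hrest : ∑ i, f (lam i) * (if i ∈ P then 0 else w i ^ 2) = 0 :=
    Finset.sum_eq_zero fun i _ => by split_ifs with hi <;> simp [hw, hi]
  have hfT := hf.sum_mul_mulVec_sq_le hlam T hcontr (contraction hlam₀ hlamsum) w
  rwa [← sub_nonneg, hsumT, hrest, add_zero] at hfT

end IsInterpolationFunctionOn

section KernelWeight

open Polynomial Lagrange

variable {ι : Type*} [Fintype ι] [DecidableEq ι] {lam : ι → ℝ} {p : ℝ[X]}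

/-- The weights `wᵢ` in the expansion `p(s) / ∏ᵢ (λᵢ + s) = ∑ᵢ wᵢ p(-λᵢ) · λᵢ / (λᵢ + s)` of a
polynomial `p` of degree less than the number of nodes. -/
noncomputable def kernelWeight (lam : ι → ℝ) (i : ι) : ℝ :=
  (lam i)⁻¹ * nodalWeight Finset.univ (-lam) i

theorem kernelWeight_ne_zero (hlam : ∀ i, 0 < lam i) (hinj : Function.Injective lam) (i : ι) :
    kernelWeight lam i ≠ 0 :=
  mul_ne_zero (inv_ne_zero (hlam i).ne')
    (nodalWeight_ne_zero (neg_injective.comp hinj).injOn (Finset.mem_univ i))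

theorem eval_eq_prod_mul_sum_kernelWeight (hlam : ∀ i, 0 < lam i) (hinj : Function.Injective lam)
    (hdeg : p.degree < Fintype.card ι) {s : ℝ} (hs : 0 ≤ s) :
    p.eval s = (∏ i, (lam i + s)) *
      ∑ i, kernelWeight lam i * p.eval (-lam i) * (lam i / (lam i + s)) := by
  have hne : ∀ i ∈ Finset.univ, s ≠ (-lam) i := fun i _ =>
    ((neg_lt_zero.2 (hlam i)).trans_le hs).ne'
  conv_lhs => rw [eq_interpolate (v := -lam) (neg_injective.comp hinj).injOn hdeg,
    eval_interpolate_not_at_node _ hne, eval_nodal]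
  refine congr_arg₂ _ (Finset.prod_congr rfl fun i _ => ?_) (Finset.sum_congr rfl fun i _ => ?_)
  · rw [Pi.neg_apply, sub_neg_eq_add, add_comm]
  · have := (hlam i).ne'
    rw [kernelWeight, Pi.neg_apply, sub_neg_eq_add, add_comm s]
    field_simp

theorem sum_kernelWeight_mul_eval_nonneg (hlam : ∀ i, 0 < lam i) (hinj : Function.Injective lam)
    (hdeg : p.degree < Fintype.card ι) (hp : 0 ≤ p.eval 0) :
    0 ≤ ∑ i, kernelWeight lam i * p.eval (-lam i) := by
  rw [eval_eq_prod_mul_sum_kernelWeight hlam hinj hdeg le_rfl] at hp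
  simp only [add_zero, div_self (hlam _).ne', mul_one] at hp
  exact nonneg_of_mul_nonneg_right hp (Finset.prod_pos fun i _ => hlam i)

theorem sum_mul_kernelWeight_mul_eval_nonneg (hlam : ∀ i, 0 < lam i)
    (hinj : Function.Injective lam) (hdeg : p.degree < Fintype.card ι)
    (hp : ∀ x, 0 ≤ x → 0 ≤ p.eval x) :
    0 ≤ ∑ i, lam i * (kernelWeight lam i * p.eval (-lam i)) := by
  have hcoeff : ∑ i, lam i * (kernelWeight lam i * p.eval (-lam i)) =
      p.coeff (Fintype.card ι - 1) := by
    rw [← Finset.card_univ, coeff_eq_sum (v := -lam) (neg_injective.comp hinj).injOn hdeg]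
    refine Finset.sum_congr rfl fun i _ => ?_
    rw [kernelWeight, mul_assoc, mul_inv_cancel_left₀ (hlam i).ne', nodalWeight,
      Finset.prod_inv_distrib, div_eq_inv_mul, Pi.neg_apply]
  have hnatDegree : p.natDegree ≤ Fintype.card ι - 1 := by
    obtain rfl | hp₀ := eq_or_ne p 0
    · simp
    · exact Nat.le_sub_one_of_lt ((natDegree_lt_iff_degree_lt hp₀).2 hdeg)
  rw [hcoeff]
  obtain hlt | heq := hnatDegree.lt_or_eq
  · exact (coeff_eq_zero_of_natDegree_lt hlt).ge
  · exact heq ▸ leadingCoeff_nonneg_of_forall_eval_nonneg hp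

theorem neg_one_pow_mul_nodalWeight_pos {n : ℕ} {v : Fin n → ℝ} (hv : StrictAnti v) (i : Fin n) :
    0 < (-1) ^ (i : ℕ) * nodalWeight Finset.univ v i := by
  have hsplit : Finset.univ.erase i = (Finset.Iio i).disjUnion (Finset.Ioi i)
      (Finset.disjoint_left.2 fun j hj hj' =>
        (Finset.mem_Iio.1 hj).asymm (Finset.mem_Ioi.1 hj')) := by
    ext j
    simp
  rw [nodalWeight, hsplit, Finset.prod_disjUnion, ← mul_assoc, ← Fin.card_Iio i,
    ← Finset.prod_const, ← Finset.prod_mul_distrib]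
  refine mul_pos (Finset.prod_pos fun j hj => ?_) (Finset.prod_pos fun j hj => ?_)
  · rw [neg_one_mul, ← inv_neg, neg_sub]
    exact inv_pos.2 (sub_pos.2 (hv (Finset.mem_Iio.1 hj)))
  · exact inv_pos.2 (sub_pos.2 (hv (Finset.mem_Ioi.1 hj)))

theorem neg_one_pow_mul_kernelWeight_pos {n : ℕ} {lam : Fin n → ℝ} (hlam : ∀ i, 0 < lam i)
    (hmono : StrictMono lam) (i : Fin n) : 0 < (-1) ^ (i : ℕ) * kernelWeight lam i :=
  (mul_pos (inv_pos.2 (hlam i)) (neg_one_pow_mul_nodalWeight_pos (v := -lam) hmono.neg i)).trans_eq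
    (mul_left_comm _ _ _)

theorem lt_card_filter_even_add_iff {n k d : ℕ} (hd : d ≤ 1) :
    k < (Finset.univ.filter fun i : Fin n => Even (i + d : ℕ)).card ↔ d + 2 * k < n := by
  have hcard : (Finset.univ.filter fun i : Fin n => Even (i + d : ℕ)).card = (n + 1 - d) / 2 := by
    rw [Finset.card_filter, Fin.sum_univ_eq_sum_range (fun k => if Even (k + d) then 1 else 0) n]
    induction n with
    | zero => simp; omega
    | succ n ih =>
      rw [Finset.sum_range_succ, ih]
      split_ifs with h <;> rw [Nat.even_iff] at h <;> omega
  omega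

theorem degree_mul_sq_lt {m q : ℝ[X]} {k n : ℕ} (hk : ∀ j, j < k → m.natDegree + 2 * j < n)
    (hq : q.degree < k) : (m * q ^ 2).degree < n := by
  obtain hzero | hne := eq_or_ne (m * q ^ 2) 0
  · rw [hzero, degree_zero]
    exact WithBot.bot_lt_coe n
  have hq₀ : q ≠ 0 := by
    rintro rfl
    simp at hne
  rw [← natDegree_lt_iff_degree_lt hne]
  calc (m * q ^ 2).natDegree ≤ m.natDegree + 2 * q.natDegree :=
        natDegree_mul_le.trans (by rw [natDegree_pow])
    _ < n := hk _ ((natDegree_lt_iff_degree_lt hq₀).2 hq)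

end KernelWeight

namespace IsInterpolationFunctionOn

open Polynomial Lagrange

variable {n : ℕ} {f : ℝ → ℝ} {I : Set ℝ} {lam : Fin n → ℝ}

theorem sum_mul_eval_mul_sq_nonneg_of_sign (hf : IsInterpolationFunctionOn n f I)
    (hlam : ∀ i, lam i ∈ I) (hlam₀ : ∀ i, 0 < lam i) (hinj : Function.Injective lam)
    {P : Finset (Fin n)} {m q : ℝ[X]} (hm : ∀ x, 0 ≤ x → 0 ≤ m.eval x)
    (hP_pos : ∀ i ∈ P, 0 < kernelWeight lam i * m.eval (-lam i))
    (hP_nonpos : ∀ i ∉ P, kernelWeight lam i * m.eval (-lam i) ≤ 0)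
    (hP_card : ∀ k, k < P.card ↔ m.natDegree + 2 * k < n)
    (hq : m.natDegree + 2 * q.natDegree < n) :
    0 ≤ ∑ i, f (lam i) * (kernelWeight lam i * (m * q ^ 2).eval (-lam i)) := by
  have hinj_P : InjOn (fun j : P => -lam j) (Finset.univ : Finset P) :=
    (neg_injective.comp (hinj.comp Subtype.val_injective)).injOn
  have hcard : (Finset.univ : Finset P).card = P.card := by rw [Finset.card_univ, Fintype.card_coe]
  let J := interpolate (Finset.univ : Finset P) fun j => -lam j
  let S : (P → ℝ) →ₗ[ℝ] (Fin n → ℝ) := .pi fun i => leval (-lam i) ∘ₗ J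
  have hS (u : P → ℝ) (j : P) : S u j = u j :=
    eval_interpolate_at_node u hinj_P (Finset.mem_univ j)
  have heval (u : P → ℝ) (i : Fin n) : kernelWeight lam i * m.eval (-lam i) * S u i ^ 2 =
      kernelWeight lam i * (m * J u ^ 2).eval (-lam i) := by
    rw [eval_mul, eval_pow, ← mul_assoc]
    rfl
  have hdeg (u : P → ℝ) : (m * J u ^ 2).degree < Fintype.card (Fin n) := by
    rw [Fintype.card_fin]
    exact degree_mul_sq_lt (fun k => (hP_card k).1) (hcard ▸ degree_interpolate_lt u hinj_P)
  have hnonneg (u : P → ℝ) (x : ℝ) (hx : 0 ≤ x) : 0 ≤ (m * J u ^ 2).eval x := by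
    rw [eval_mul, eval_pow]
    exact mul_nonneg (hm x hx) (sq_nonneg _)
  obtain ⟨u, rfl⟩ : ∃ u, q = J u := ⟨_, eq_interpolate hinj_P <|
    degree_le_natDegree.trans_lt (Nat.cast_lt.2 (hcard ▸ (hP_card _).2 hq))⟩
  simp only [← heval]
  refine hf.sum_mul_extension_sq_nonneg hlam (fun i => (hlam₀ i).le) hS hP_pos hP_nonpos
    (fun u => ?_) (fun u => ?_) u <;> simp only [heval]
  · exact sum_kernelWeight_mul_eval_nonneg hlam₀ hinj (hdeg u) (hnonneg u 0 le_rfl)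
  · exact sum_mul_kernelWeight_mul_eval_nonneg hlam₀ hinj (hdeg u) (hnonneg u)

/-- The interpolation map must have its nodes exactly where the weights are positive, and their
number must be the dimension of the space of admissible `q`: for `m = 1` these are the even indices,
for `m = X` the odd ones. -/
theorem sum_mul_eval_mul_sq_nonneg (hf : IsInterpolationFunctionOn n f I)
    (hlam : ∀ i, lam i ∈ I) (hlam₀ : ∀ i, 0 < lam i) (hmono : StrictMono lam) {m q : ℝ[X]}
    (hm_deg : m.natDegree ≤ 1) (hm_nonneg : ∀ x, 0 ≤ x → 0 ≤ m.eval x)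
    (hm_neg : ∀ x < 0, 0 < (-1) ^ m.natDegree * m.eval x)
    (hq : m.natDegree + 2 * q.natDegree < n) :
    0 ≤ ∑ i, f (lam i) * (kernelWeight lam i * (m * q ^ 2).eval (-lam i)) := by
  have hsign (i : Fin n) :
      0 < (-1) ^ (i + m.natDegree : ℕ) * (kernelWeight lam i * m.eval (-lam i)) := by
    rw [pow_add, mul_mul_mul_comm]
    exact mul_pos (neg_one_pow_mul_kernelWeight_pos hlam₀ hmono i)
      (hm_neg (-lam i) (neg_lt_zero.2 (hlam₀ i)))
  refine hf.sum_mul_eval_mul_sq_nonneg_of_sign hlam hlam₀ hmono.injective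
    (P := Finset.univ.filter fun i : Fin n => Even (i + m.natDegree : ℕ)) hm_nonneg
    (fun i hi => ?_) (fun i hi => ?_) (fun k => lt_card_filter_even_add_iff hm_deg) hq
  · have heven : Even (i + m.natDegree : ℕ) := (Finset.mem_filter.1 hi).2
    simpa only [heven.neg_one_pow, one_mul] using hsign i
  · have hodd : Odd (i + m.natDegree : ℕ) := Nat.not_even_iff_odd.1 (by simpa using hi)
    have := hsign i
    rw [hodd.neg_one_pow, neg_one_mul, neg_pos] at this
    exact this.le

theorem sum_mul_eval_nonneg_of_mem_halfLineSOS (hf : IsInterpolationFunctionOn n f I)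
    (hlam : ∀ i, lam i ∈ I) (hlam₀ : ∀ i, 0 < lam i) (hmono : StrictMono lam) {p : ℝ[X]}
    (hp : p ∈ halfLineSOS n) :
    0 ≤ ∑ i, f (lam i) * (kernelWeight lam i * p.eval (-lam i)) := by
  induction hp using AddSubmonoid.closure_induction with
  | mem p hp =>
    obtain ⟨m, q, rfl | rfl, hq, rfl⟩ := hp
    · exact hf.sum_mul_eval_mul_sq_nonneg hlam hlam₀ hmono (by simp) (by simp) (by simp) hq
    · exact hf.sum_mul_eval_mul_sq_nonneg hlam hlam₀ hmono (by simp) (by simp) (by simp) hq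
  | zero => simp
  | add p q _ _ hp hq =>
    simpa only [eval_add, mul_add, Finset.sum_add_distrib] using add_nonneg hp hq

theorem sum_mul_nonneg_of_forall_sum_mul_div_add_nonneg (hf : IsInterpolationFunctionOn n f I)
    (hlam : ∀ i, lam i ∈ I) (hlam₀ : ∀ i, 0 < lam i) (hmono : StrictMono lam) {c : Fin n → ℝ}
    (hc : ∀ s, 0 ≤ s → 0 ≤ ∑ i, c i * (lam i / (lam i + s))) : 0 ≤ ∑ i, c i * f (lam i) := by
  have hinj : InjOn (-lam) (Finset.univ : Finset (Fin n)) :=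
    (neg_injective.comp hmono.injective).injOn
  let R := interpolate Finset.univ (-lam) fun i => c i / kernelWeight lam i
  have hR_node (i : Fin n) : kernelWeight lam i * R.eval (-lam i) = c i := by
    have : R.eval (-lam i) = c i / kernelWeight lam i :=
      eval_interpolate_at_node _ hinj (Finset.mem_univ i)
    rw [this, mul_div_cancel₀ _ (kernelWeight_ne_zero hlam₀ hmono.injective i)]
  have hR_deg : R.degree < Fintype.card (Fin n) := degree_interpolate_lt _ hinj
  have hR_nonneg (s : ℝ) (hs : 0 ≤ s) : 0 ≤ R.eval s := by
    rw [eval_eq_prod_mul_sum_kernelWeight hlam₀ hmono.injective hR_deg hs]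
    simp only [hR_node]
    exact mul_nonneg (Finset.prod_nonneg fun i _ => add_nonneg (hlam₀ i).le hs) (hc s hs)
  have hR_mem : R ∈ halfLineSOS n := by
    obtain hR₀ | hR₀ := eq_or_ne R 0
    · exact hR₀ ▸ zero_mem _
    · rw [Fintype.card_fin, ← natDegree_lt_iff_degree_lt hR₀] at hR_deg
      exact halfLineSOS_mono hR_deg (mem_halfLineSOS_of_forall_eval_nonneg hR_nonneg)
  simpa only [hR_node, mul_comm (c _)] using
    hf.sum_mul_eval_nonneg_of_mem_halfLineSOS hlam hlam₀ hmono hR_mem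

theorem exists_operatorMonotoneOn_of_strictMono (hf : IsInterpolationFunctionOn n f I)
    (hI : I ⊆ Ioi 0) (hfpos : ∀ x ∈ I, 0 < f x) (hmono : StrictMono lam)
    (hlam : ∀ i, lam i ∈ I) :
    ∃ h, OperatorMonotoneOn h (Ioi 0) ∧ ∀ i, h (lam i) = f (lam i) :=
  have hlam₀ (i : Fin n) : 0 < lam i := hI (hlam i)
  exists_operatorMonotoneOn_interpolating hlam₀ (fun i => hfpos _ (hlam i)) fun _ hc =>
    hf.sum_mul_nonneg_of_forall_sum_mul_div_add_nonneg hlam hlam₀ hmono hc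

end IsInterpolationFunctionOn

theorem exists_strictMono_range_subset_range {α : Type*} [LinearOrder α] {I : Set α}
    (hI : I.Infinite) {n : ℕ} {x : Fin n → α} (hx : ∀ i, x i ∈ I) :
    ∃ y : Fin n → α, StrictMono y ∧ (∀ i, y i ∈ I) ∧ range x ⊆ range y := by
  obtain rfl | hn := n.eq_zero_or_pos
  · exact ⟨x, Subsingleton.strictMono x, hx, Subset.rfl⟩
  have hcard : (range x).ncard ≤ n := by
    rw [← Nat.card_coe_set_eq]
    simpa using Finite.card_range_le x
  obtain ⟨S, hxS, hSI, hS⟩ :=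
    hI.exists_superset_ncard_eq (range_subset_iff.2 hx) (finite_range x) hcard
  have hfin : S.Finite := finite_of_ncard_pos (hS ▸ hn)
  let e := hfin.toFinset.orderEmbOfFin ((ncard_eq_toFinset_card S hfin).symm.trans hS)
  refine ⟨e, e.strictMono, fun i => ?_, ?_⟩
  · exact hSI (hfin.mem_toFinset.1 (Finset.orderEmbOfFin_mem _ _ i))
  · rwa [Finset.range_orderEmbOfFin, Finite.coe_toFinset]

theorem stmt_1_general {n : ℕ} {f : ℝ → ℝ} {I : Set ℝ} (hI : I.Infinite) (hI₀ : I ⊆ Ioi 0)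
    (hfpos : ∀ x ∈ I, 0 < f x) (hf : IsInterpolationFunctionOn n f I) {lam : Fin n → ℝ}
    (hlam : ∀ i, lam i ∈ I) :
    ∃ h, OperatorMonotoneOn h (Ioi 0) ∧ ∀ i, h (lam i) = f (lam i) := by
  obtain ⟨μ, hmono, hμ, hlamμ⟩ := exists_strictMono_range_subset_range hI hlam
  obtain ⟨h, hh, hhμ⟩ := hf.exists_operatorMonotoneOn_of_strictMono hI₀ hfpos hmono hμ
  refine ⟨h, hh, fun i => ?_⟩
  obtain ⟨j, hj⟩ := hlamμ (mem_range_self i)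
  rw [← hj, hhμ]

/-- Theorem 2.2, (3) ⇒ (1): if `f` satisfies the matrix inequality (3), then every `n` points of
`(0,1)` admit an operator monotone interpolant of `f`, i.e. `f ∈ Cₙ([0,1])`. -/
theorem stmt_1 (n : ℕ) (hn : 1 ≤ n) (f : ℝ → ℝ)
    (hfc : ContinuousOn f (Icc (0:ℝ) 1))
    (hfpos : f '' Ioo (0:ℝ) 1 ⊆ Ioi (0:ℝ))
    (hineq : ∀ A T : Matrix (Fin n) (Fin n) ℂ, A.IsHermitian →
      spectrum ℝ A ⊆ Ioo (0:ℝ) 1 →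
      (1 - Tᴴ * T).PosSemidef →
      (A - Tᴴ * A * T).PosSemidef →
      (cfc f A - Tᴴ * cfc f A * T).PosSemidef) :
    ∀ lam : Fin n → ℝ, (∀ i, lam i ∈ Ioo (0:ℝ) 1) →
      ∃ h : ℝ → ℝ, (∀ k : ℕ, MatrixMonotoneOn k h (Ioo (0:ℝ) 1)) ∧
        ∀ i, h (lam i) = f (lam i) := by
  intro lam hlam
  obtain ⟨h, hh, hhf⟩ := stmt_1_general (Ioo_infinite zero_lt_one) Ioo_subset_Ioi_self
    (image_subset_iff.1 hfpos) hineq hlam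
  exact ⟨h, hh.mono Ioo_subset_Ioi_self, hhf⟩
end

section
/- Let n ≥ 1, let f : [0,1] → ℝ be continuous with f((0,1)) ⊆ (0,∞), and fix points λ₁, …, λₙ ∈ (0,1). Suppose that for all real numbers a₁, …, aₙ, whenever Σᵢ₌₁ⁿ aᵢ·(1+t)λᵢ/(1+(t−1)λᵢ) ≥ 0 for all t ∈ [0,∞), it follows that Σᵢ₌₁ⁿ aᵢ f(λᵢ) ≥ 0. Then there exist a finite Borel measure ρ on [0,∞) and a constant c ≥ 0 such that f(λᵢ) = ∫_{[0,∞)} (1+t)λᵢ/(1+(t−1)λᵢ) dρ(t) + c for each 1 ≤ i ≤ n. (In particular the function h(λ) = ∫_{[0,∞)} (1+t)λ/(1+(t−1)λ) dρ(t) + c is a Pick function on (0,1) interpolating f at λ₁, …, λₙ.) -/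
/-!
The kernel `(1 + t) * l / (1 + (t - 1) * l) = 1 + (2 * l - 1) / (1 + (t - 1) * l)` tends to `1` as
`t → ∞`, so it extends to a continuous positive function on the compact space `[0, ∞]`. The
hypothesis says that `∑ i, a i • kernel (lam i) ↦ ∑ i, a i * f (lam i)` is a well-defined positive
functional on the span of these functions. As the span contains a strictly positive function,
M. Riesz's extension theorem extends it to a positive functional on `C([0, ∞])`, which by the
Riesz–Markov–Kakutani theorem is integration against a finite measure. Its restriction to `[0, ∞)`
is `ρ`, and its mass at `∞` is `c`.
-/

open Matrix Set MeasureTheory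
open scoped ComplexOrder

open CompactlySupported Filter OnePoint Topology

section PositiveFunctional

variable {V : Type*} [AddCommGroup V] [Module ℝ V]

theorem exists_positiveLinearMap_comp_eq {E : Type*} [AddCommGroup E] [PartialOrder E]
    [IsOrderedAddMonoid E] [Module ℝ E] [PosSMulMono ℝ E] (A : V →ₗ[ℝ] E) (L : V →ₗ[ℝ] ℝ)
    (nonneg : ∀ v, 0 ≤ A v → 0 ≤ L v) (cofinal : ∀ y, ∃ v, y ≤ A v) :
    ∃ Λ : E →ₚ[ℝ] ℝ, ∀ v, Λ (A v) = L v := by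
  have map_eq_zero (v : V) (hv : A v = 0) : L v = 0 :=
    le_antisymm (by simpa using nonneg (-v) (by simp [hv])) (nonneg v hv.ge)
  obtain ⟨q, rfl⟩ : L ∈ LinearMap.range A.dualMap := by
    rw [LinearMap.range_dualMap_eq_dualAnnihilator_ker, Submodule.mem_dualAnnihilator]
    exact map_eq_zero
  let p : E →ₗ.[ℝ] ℝ := ⟨LinearMap.range A, q.domRestrict _⟩
  have p_nonneg : ∀ x : p.domain, (x : E) ∈ PointedCone.positive ℝ E → 0 ≤ p x := by
    rintro ⟨_, v, rfl⟩ hv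
    exact nonneg v hv
  have domain_cofinal (y : E) : ∃ x : p.domain, (x : E) + y ∈ PointedCone.positive ℝ E := by
    obtain ⟨v, hv⟩ := cofinal (-y)
    exact ⟨⟨A v, v, rfl⟩, neg_le_iff_add_nonneg.1 hv⟩
  obtain ⟨Λ, hΛ, Λ_nonneg⟩ := riesz_extension _ p p_nonneg domain_cofinal
  exact ⟨.mk₀ Λ Λ_nonneg, fun v => hΛ ⟨A v, v, rfl⟩⟩

variable {X : Type*} [TopologicalSpace X]

theorem exists_le_smul_of_forall_pos [CompactSpace X] {u : C(X, ℝ)} (hu : ∀ x, 0 < u x)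
    (g : C(X, ℝ)) : ∃ c : ℝ, g ≤ c • u := by
  have continuous_div : Continuous fun x => g x / u x :=
    g.continuous.div u.continuous fun x => (hu x).ne'
  obtain ⟨c, hc⟩ := (isCompact_range continuous_div).bddAbove
  exact ⟨c, fun x => (div_le_iff₀ (hu x)).1 (hc (mem_range_self x))⟩

section Compact

variable [CompactSpace X] [T2Space X] [MeasurableSpace X] [BorelSpace X]

theorem exists_isFiniteMeasure_integral_eq_positiveLinearMap (Λ : C(X, ℝ) →ₚ[ℝ] ℝ) :
    ∃ μ : Measure X, IsFiniteMeasure μ ∧ ∀ g : C(X, ℝ), ∫ x, g x ∂μ = Λ g := by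
  let toContinuousMap : C_c(X, ℝ) →ₗ[ℝ] C(X, ℝ) :=
    { toFun g := g, map_add' _ _ := rfl, map_smul' _ _ := rfl }
  let Λc : C_c(X, ℝ) →ₚ[ℝ] ℝ :=
    .mk₀ (Λ.toLinearMap ∘ₗ toContinuousMap) fun _ hg => Λ.map_nonneg hg
  exact ⟨RealRMK.rieszMeasure Λc, inferInstance, fun g => RealRMK.integral_rieszMeasure Λc
    (CompactlySupportedContinuousMap.continuousMapEquiv g)⟩

theorem exists_isFiniteMeasure_integral_eq (A : V →ₗ[ℝ] C(X, ℝ)) (L : V →ₗ[ℝ] ℝ)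
    (nonneg : ∀ v, 0 ≤ A v → 0 ≤ L v) {u : V} (hu : ∀ x, 0 < A u x) :
    ∃ μ : Measure X, IsFiniteMeasure μ ∧ ∀ v, L v = ∫ x, A v x ∂μ := by
  have cofinal (g : C(X, ℝ)) : ∃ v, g ≤ A v := by
    obtain ⟨c, hc⟩ := exists_le_smul_of_forall_pos hu g
    exact ⟨c • u, by rwa [A.map_smul]⟩
  obtain ⟨Λ, hΛ⟩ := exists_positiveLinearMap_comp_eq A L nonneg cofinal
  obtain ⟨μ, hμ, integral_eq⟩ := exists_isFiniteMeasure_integral_eq_positiveLinearMap Λ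
  exact ⟨μ, hμ, fun v => by rw [integral_eq, hΛ]⟩

end Compact

section OnePoint

variable [MeasurableSpace X] [BorelSpace X]

theorem integral_onePoint_eq_integral_comap_add [MeasurableSpace (OnePoint X)]
    [BorelSpace (OnePoint X)] {μ : Measure (OnePoint X)} {g : OnePoint X → ℝ}
    (hg : Integrable g μ) :
    ∫ x, g x ∂μ = ∫ x : X, g x ∂(μ.comap (↑)) + μ.real {∞} * g ∞ := by
  have coe_emb : MeasurableEmbedding ((↑) : X → OnePoint X) :=
    isOpenEmbedding_coe.measurableEmbedding
  have integral_infty : ∫ x in {∞}, g x ∂μ = μ.real {∞} * g ∞ := by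
    rw [setIntegral_congr_fun isClosed_infty.measurableSet fun x hx => congrArg g hx,
      setIntegral_const, smul_eq_mul]
  rw [← integral_add_compl coe_emb.measurableSet_range hg, compl_range_coe, integral_infty,
    ← coe_emb.map_comap, coe_emb.integral_map]

theorem exists_isFiniteMeasure_integral_add_infty_eq [LocallyCompactSpace X] [T2Space X]
    (A : V →ₗ[ℝ] C(OnePoint X, ℝ)) (L : V →ₗ[ℝ] ℝ) (nonneg : ∀ v, 0 ≤ A v → 0 ≤ L v)
    {u : V} (hu : ∀ x, 0 < A u x) :
    ∃ ρ : Measure X, IsFiniteMeasure ρ ∧ ∃ c : ℝ, 0 ≤ c ∧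
      ∀ v, L v = ∫ x : X, A v x ∂ρ + c * A v ∞ := by
  borelize (OnePoint X)
  obtain ⟨μ, _, hμ⟩ := exists_isFiniteMeasure_integral_eq A L nonneg hu
  refine ⟨μ.comap (↑), inferInstance, μ.real {∞}, measureReal_nonneg, fun v => ?_⟩
  rw [hμ, integral_onePoint_eq_integral_comap_add
    ((A v).continuous.integrable_of_hasCompactSupport (.of_compactSpace _))]

end OnePoint

end PositiveFunctional

theorem tendsto_coe_Ici_cocompact_atTop {α : Type*} [LinearOrder α] [TopologicalSpace α]
    [ClosedIciTopology α] [CompactIccSpace α] (a : α) :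
    Tendsto ((↑) : Ici a → α) (cocompact (Ici a)) atTop := by
  refine tendsto_atTop.2 fun b => mem_cocompact.2 ⟨(↑) ⁻¹' Icc a b, ?_, fun x hx => ?_⟩
  · exact isClosed_Ici.isClosedEmbedding_subtypeVal.isCompact_preimage isCompact_Icc
  · exact le_of_not_ge fun hxb => hx ⟨x.2, hxb⟩

/-- The kernel of the integral representation of positive Pick functions on `(0, 1)`, at the point
`l` of that interval and the node `t ∈ [0, ∞)`. -/
noncomputable def pickKernel (l t : ℝ) : ℝ := (1 + t) * l / (1 + (t - 1) * l)

section PickKernel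

variable {l t : ℝ}

theorem pickKernel_denom_pos (hl : l ∈ Ioo (0 : ℝ) 1) (ht : 0 ≤ t) : 0 < 1 + (t - 1) * l := by
  linarith [hl.2, mul_nonneg ht hl.1.le]

theorem pickKernel_pos (hl : l ∈ Ioo (0 : ℝ) 1) (ht : 0 ≤ t) : 0 < pickKernel l t :=
  div_pos (mul_pos (by linarith) hl.1) (pickKernel_denom_pos hl ht)

theorem continuousOn_pickKernel (hl : l ∈ Ioo (0 : ℝ) 1) :
    ContinuousOn (pickKernel l) (Ici (0 : ℝ)) :=
  ContinuousOn.div (by fun_prop) (by fun_prop) fun _ ht => (pickKernel_denom_pos hl ht).ne'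

theorem pickKernel_eq_one_add (h : 1 + (t - 1) * l ≠ 0) :
    pickKernel l t = 1 + (2 * l - 1) / (1 + (t - 1) * l) := by
  rw [pickKernel, one_add_div h]
  ring

theorem tendsto_pickKernel_atTop (hl : 0 < l) : Tendsto (pickKernel l) atTop (𝓝 1) := by
  have denom_atTop : Tendsto (fun t : ℝ => 1 + (t - 1) * l) atTop atTop :=
    tendsto_atTop_add_const_left _ _
      ((tendsto_atTop_add_const_right _ (-1) tendsto_id).atTop_mul_const hl)
  have limit : Tendsto (fun t : ℝ => 1 + (2 * l - 1) / (1 + (t - 1) * l)) atTop (𝓝 1) := by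
    simpa using (tendsto_const_nhds.div_atTop denom_atTop).const_add 1
  refine limit.congr' ?_
  filter_upwards [denom_atTop.eventually_gt_atTop 0] with t ht
  exact (pickKernel_eq_one_add ht.ne').symm

/-- The continuous extension of `pickKernel l` to `[0, ∞]`, modelled as `OnePoint (Ici 0)`; its
value at `∞` is the limit `1`. -/
noncomputable def compactifiedPickKernel (hl : l ∈ Ioo (0 : ℝ) 1) :
    C(OnePoint (Ici (0 : ℝ)), ℝ) :=
  continuousMapMk ⟨fun t => pickKernel l t, (continuousOn_pickKernel hl).domRestrict⟩ 1 <| by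
    rw [coclosedCompact_eq_cocompact]
    exact (tendsto_pickKernel_atTop hl.1).comp (tendsto_coe_Ici_cocompact_atTop 0)

theorem compactifiedPickKernel_coe (hl : l ∈ Ioo (0 : ℝ) 1) (t : Ici (0 : ℝ)) :
    compactifiedPickKernel hl t = pickKernel l t := rfl

theorem compactifiedPickKernel_infty (hl : l ∈ Ioo (0 : ℝ) 1) :
    compactifiedPickKernel hl ∞ = 1 := rfl

theorem compactifiedPickKernel_pos (hl : l ∈ Ioo (0 : ℝ) 1) (x : OnePoint (Ici (0 : ℝ))) :
    0 < compactifiedPickKernel hl x := by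
  induction x using OnePoint.rec with
  | infty => exact one_pos
  | coe t => exact pickKernel_pos hl t.2

end PickKernel

theorem stmt_3_general {ι : Type*} (F lam : ι → ℝ) (hlam : ∀ i, lam i ∈ Ioo (0 : ℝ) 1)
    (hyp : ∀ a : ι →₀ ℝ, (∀ t : ℝ, 0 ≤ t → 0 ≤ a.sum fun i r => r * pickKernel (lam i) t) →
      0 ≤ a.sum fun i r => r * F i) :
    ∃ (ρ : Measure (Ici (0 : ℝ))) (_ : IsFiniteMeasure ρ) (c : ℝ), 0 ≤ c ∧
      ∀ i, F i = (∫ t : Ici (0 : ℝ), pickKernel (lam i) t ∂ρ) + c := by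
  rcases isEmpty_or_nonempty ι with _ | ⟨⟨i₀⟩⟩
  · exact ⟨0, inferInstance, 0, le_rfl, isEmptyElim⟩
  have : LocallyCompactSpace (Ici (0 : ℝ)) := isClosed_Ici.locallyCompactSpace
  let A : (ι →₀ ℝ) →ₗ[ℝ] C(OnePoint (Ici (0 : ℝ)), ℝ) :=
    Finsupp.linearCombination ℝ fun i => compactifiedPickKernel (hlam i)
  let L : (ι →₀ ℝ) →ₗ[ℝ] ℝ := Finsupp.linearCombination ℝ F
  have nonneg (a : ι →₀ ℝ) (ha : 0 ≤ A a) : 0 ≤ L a := hyp a fun t ht => by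
    simpa [A, Finsupp.linearCombination_apply, Finsupp.sum, ContinuousMap.sum_apply,
      compactifiedPickKernel_coe] using ha ((⟨t, ht⟩ : Ici (0 : ℝ)) : OnePoint (Ici (0 : ℝ)))
  have A_single (i : ι) : A (.single i 1) = compactifiedPickKernel (hlam i) := by simp [A]
  have L_single (i : ι) : L (.single i 1) = F i := by simp [L]
  have A_pos (x : OnePoint (Ici (0 : ℝ))) : 0 < A (.single i₀ 1) x := by
    rw [A_single]
    exact compactifiedPickKernel_pos (hlam i₀) x
  obtain ⟨ρ, hρ, c, hc, integral_eq⟩ :=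
    exists_isFiniteMeasure_integral_add_infty_eq A L nonneg A_pos
  refine ⟨ρ, hρ, c, hc, fun i => ?_⟩
  simpa only [A_single, L_single, compactifiedPickKernel_coe, compactifiedPickKernel_infty,
    mul_one] using integral_eq (.single i 1)

/-- Theorem 2.2, (2) ⇒ (1): from the positivity condition (2) one produces a finite Borel measure
`ρ` on `[0,∞)` and a constant `c ≥ 0` (the mass at the point at infinity) giving an integral
representation, i.e. a Pick function on `(0,1)`, interpolating `f` at `λ₁, …, λₙ`. -/
theorem stmt_3 (n : ℕ) (hn : 1 ≤ n) (f : ℝ → ℝ)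
    (hfc : ContinuousOn f (Icc (0:ℝ) 1))
    (hfpos : f '' Ioo (0:ℝ) 1 ⊆ Ioi (0:ℝ))
    (lam : Fin n → ℝ) (hlam : ∀ i, lam i ∈ Ioo (0:ℝ) 1)
    (hyp : ∀ a : Fin n → ℝ,
      (∀ t : ℝ, 0 ≤ t →
        0 ≤ ∑ i, a i * ((1 + t) * lam i / (1 + (t - 1) * lam i))) →
      0 ≤ ∑ i, a i * f (lam i)) :
    ∃ (ρ : Measure (Ici (0:ℝ))) (_ : IsFiniteMeasure ρ) (c : ℝ), 0 ≤ c ∧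
      ∀ i, f (lam i) =
        (∫ t : Ici (0:ℝ), (1 + (t : ℝ)) * lam i / (1 + ((t : ℝ) - 1) * lam i) ∂ρ) + c := by
  refine stmt_3_general (fun i => f (lam i)) lam hlam fun a ha => ?_
  rw [Finsupp.sum_fintype _ _ (by simp)]
  exact hyp a fun t ht => by simpa [Finsupp.sum_fintype, pickKernel] using ha t ht
end

section
/- For each n ≥ 1 there exists a continuous function f : [0,∞) → ℝ with f((0,∞)) ⊆ (0,∞) such that: (a) f is matrix monotone of order n on [0,∞); and (b) there exist 2n points λ₁, …, λ_{2n} ∈ (0,∞) such that no function h : (0,∞) → (0,∞) which is matrix monotone of order k for every k ∈ ℕ (i.e. operator monotone and positive on (0,∞)) satisfies h(λᵢ) = f(λᵢ) for all 1 ≤ i ≤ 2n. Equivalently, the interpolation class C_{2n}([0,∞)) does not contain the class P_n⁺([0,∞)) of positive n-monotone functions on [0,∞). -/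
/-!
Let `k_s t = t / (1 + s t)` and `f = k_0 + ⋯ + k_{n-1} - ε k_n`. Under a rank-one increase
`A ≤ A + v v*` the quadratic form of `k_s` at `x` increases by `|⟨x, (1 + s A)⁻¹ v⟩|²`, up to a
positive factor that decreases in `s`. On `n × n` matrices `s ↦ ⟨x, (1 + s A)⁻¹ v⟩` is a polynomial
of degree less than `n` divided by the increasing function `∏ᵢ (1 + s aᵢ)`, so its value at `s = n`
is controlled by its values at `0, …, n - 1`, and `f` is `n`-monotone as soon as `ε` is small.

If `h ≥ 0` is `2n`-monotone on `(0, ∞)`, Hansen's argument with `2 × 2` block matrices shows that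
`t h(1 / t)` is `n`-monotone. But `t k_s(1 / t) = t / (s + t)` increases by a multiple of
`s |⟨x, (s + A)⁻¹ v⟩|²`, which already vanishes at `s = 0`; the numerator of `⟨x, (s + A)⁻¹ v⟩` may
therefore be chosen to vanish at `1, …, n - 1` and not at `n`, so `t f(1 / t)` is not `n`-monotone
for any `ε > 0`. This failure involves only the eigenvalues of two `n × n` matrices, hence `2n`
values of `f`, and these values cannot be those of such an `h`.
-/

open Matrix Set MeasureTheory
open scoped ComplexOrder

section FunctionalCalculus

variable {ι κ : Type*} [Fintype ι] [Fintype κ]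

lemma posSemidef_of_re_dotProduct_nonneg {M : Matrix ι ι ℂ} (hM : M.IsHermitian)
    (h : ∀ x, 0 ≤ (star x ⬝ᵥ M *ᵥ x).re) : M.PosSemidef :=
  .of_dotProduct_mulVec_nonneg hM fun x =>
    Complex.nonneg_iff.2 ⟨h x, (hM.im_star_dotProduct_mulVec_self x).symm⟩

variable [DecidableEq ι] [DecidableEq κ]

lemma continuousOn_spectrum (f : ℝ → ℝ) (A : Matrix ι ι ℂ) : ContinuousOn f (spectrum ℝ A) :=
  A.finite_real_spectrum.continuousOn f

lemma isHermitian_cfc (f : ℝ → ℝ) (A : Matrix ι ι ℂ) : (cfc f A).IsHermitian :=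
  cfc_predicate f A

lemma spectrum_subset_Ici_zero_iff {A : Matrix ι ι ℂ} (hA : A.IsHermitian) :
    spectrum ℝ A ⊆ Ici 0 ↔ A.PosSemidef := by
  rw [hA.posSemidef_iff_eigenvalues_nonneg, hA.spectrum_real_eq_range_eigenvalues,
    range_subset_iff]
  rfl

lemma spectrum_subset_Ioi_zero_iff {A : Matrix ι ι ℂ} (hA : A.IsHermitian) :
    spectrum ℝ A ⊆ Ioi 0 ↔ A.PosDef := by
  rw [hA.posDef_iff_eigenvalues_pos, hA.spectrum_real_eq_range_eigenvalues, range_subset_iff]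
  rfl

lemma posSemidef_cfc {A : Matrix ι ι ℂ} (hA : A.IsHermitian) {f : ℝ → ℝ}
    (hf : ∀ t ∈ spectrum ℝ A, 0 ≤ f t) : (cfc f A).PosSemidef := by
  rw [← spectrum_subset_Ici_zero_iff (isHermitian_cfc f A),
    cfc_map_spectrum f A hA.isSelfAdjoint (continuousOn_spectrum f A)]
  rintro _ ⟨t, ht, rfl⟩
  exact hf t ht

lemma posDef_cfc {A : Matrix ι ι ℂ} (hA : A.IsHermitian) {f : ℝ → ℝ}
    (hf : ∀ t ∈ spectrum ℝ A, 0 < f t) : (cfc f A).PosDef := by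
  rw [← spectrum_subset_Ioi_zero_iff (isHermitian_cfc f A),
    cfc_map_spectrum f A hA.isSelfAdjoint (continuousOn_spectrum f A)]
  rintro _ ⟨t, ht, rfl⟩
  exact hf t ht

lemma cfc_cfc {A : Matrix ι ι ℂ} (hA : A.IsHermitian) (g f : ℝ → ℝ) :
    cfc g (cfc f A) = cfc (fun t => g (f t)) A :=
  (cfc_comp' g f A ((A.finite_real_spectrum.image f).continuousOn g) (continuousOn_spectrum f A)
    hA.isSelfAdjoint).symm

lemma cfc_mul_cfc_mul_cfc (f g k : ℝ → ℝ) (A : Matrix ι ι ℂ) :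
    cfc f A * cfc g A * cfc k A = cfc (fun t => f t * g t * k t) A := by
  rw [← cfc_mul f g A (continuousOn_spectrum _ A) (continuousOn_spectrum _ A),
    ← cfc_mul _ k A (continuousOn_spectrum _ A) (continuousOn_spectrum _ A)]

lemma cfc_sqrt_mul_cfc_mul_cfc_sqrt {A : Matrix ι ι ℂ} (hA : A.PosSemidef) (f : ℝ → ℝ) :
    cfc Real.sqrt A * cfc f A * cfc Real.sqrt A = cfc (fun t => t * f t) A := by
  rw [cfc_mul_cfc_mul_cfc]
  refine cfc_congr fun t ht => ?_
  have ht0 : 0 ≤ t := (spectrum_subset_Ici_zero_iff hA.isHermitian).2 hA ht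
  rw [mul_right_comm, Real.mul_self_sqrt ht0]

lemma cfc_sqrt_mul_cfc_sqrt {A : Matrix ι ι ℂ} (hA : A.PosSemidef) :
    cfc Real.sqrt A * cfc Real.sqrt A = A := by
  have h := cfc_sqrt_mul_cfc_mul_cfc_sqrt hA fun _ => 1
  simp only [mul_one] at h
  rwa [cfc_const_one ℝ A hA.isHermitian.isSelfAdjoint, mul_one,
    cfc_id' ℝ A hA.isHermitian.isSelfAdjoint] at h

lemma cfc_sqrt_mul_cfc_sqrt_inv {A : Matrix ι ι ℂ} (hA : A.PosDef) :
    cfc Real.sqrt A * cfc (fun t => (√t)⁻¹) A = 1 := by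
  rw [← cfc_mul _ _ A (continuousOn_spectrum _ A) (continuousOn_spectrum _ A),
    ← cfc_one ℝ A hA.isHermitian.isSelfAdjoint]
  refine cfc_congr fun t ht => mul_inv_cancel₀ ?_
  exact (Real.sqrt_pos.2 ((spectrum_subset_Ioi_zero_iff hA.isHermitian).2 hA ht)).ne'

lemma cfc_sqrt_inv_mul_cfc_sqrt_inv {A : Matrix ι ι ℂ} (hA : A.PosDef) :
    cfc (fun t => (√t)⁻¹) A * cfc (fun t => (√t)⁻¹) A = cfc (fun t : ℝ => t⁻¹) A := by
  rw [← cfc_mul _ _ A (continuousOn_spectrum _ A) (continuousOn_spectrum _ A)]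
  refine cfc_congr fun t ht => ?_
  have ht0 : 0 < t := (spectrum_subset_Ioi_zero_iff hA.isHermitian).2 hA ht
  rw [← mul_inv, Real.mul_self_sqrt ht0.le]

lemma aeval_mul_eq_mul_aeval {M : Matrix κ κ ℂ} {Y : Matrix ι ι ℂ} {W : Matrix κ ι ℂ}
    (h : M * W = W * Y) (p : Polynomial ℝ) :
    Polynomial.aeval M p * W = W * Polynomial.aeval Y p := by
  induction p using Polynomial.induction_on' with
  | add p q hp hq => rw [map_add, map_add, Matrix.add_mul, Matrix.mul_add, hp, hq]
  | monomial k a =>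
    have hpow : M ^ k * W = W * Y ^ k := by
      induction k with
      | zero => simp
      | succ k ih => rw [pow_succ, pow_succ', Matrix.mul_assoc, h, ← Matrix.mul_assoc, ih,
          Matrix.mul_assoc, ← pow_succ, pow_succ']
    simp only [Polynomial.aeval_monomial, Algebra.algebraMap_eq_smul_one, smul_mul_assoc, one_mul,
      Matrix.smul_mul, Matrix.mul_smul, hpow]

lemma cfc_mul_eq_mul_cfc (f : ℝ → ℝ) {M : Matrix κ κ ℂ} {Y : Matrix ι ι ℂ} {W : Matrix κ ι ℂ}
    (hM : M.IsHermitian) (hY : Y.IsHermitian) (h : M * W = W * Y) :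
    cfc f M * W = W * cfc f Y := by
  classical
  set nodes := (M.finite_real_spectrum.union Y.finite_real_spectrum).toFinset with hnodes
  set p := Lagrange.interpolate nodes id f
  have hp : ∀ t ∈ spectrum ℝ M ∪ spectrum ℝ Y, f t = p.eval t := fun t ht =>
    (Lagrange.eval_interpolate_at_node (v := id) f Function.injective_id.injOn
      (by rwa [hnodes, Set.Finite.mem_toFinset])).symm
  rw [cfc_congr fun t ht => hp t (.inl ht), cfc_congr fun t ht => hp t (.inr ht),
    cfc_polynomial p M hM.isSelfAdjoint, cfc_polynomial p Y hY.isSelfAdjoint,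
    aeval_mul_eq_mul_aeval h]

lemma cfc_submatrix_equiv (f : ℝ → ℝ) {M : Matrix ι ι ℂ} (hM : M.IsHermitian) (e : κ ≃ ι) :
    cfc f (M.submatrix e e) = (cfc f M).submatrix e e := by
  have h := cfc_mul_eq_mul_cfc f (W := (1 : Matrix ι ι ℂ).submatrix e (Equiv.refl ι))
    (hM.submatrix e) hM (by rw [mul_submatrix_one, one_submatrix_mul, submatrix_submatrix]; simp)
  rw [mul_submatrix_one, one_submatrix_mul] at h
  simpa using congrArg (fun N => N.submatrix id e) h

lemma spectrum_submatrix_equiv (M : Matrix ι ι ℂ) (e : κ ≃ ι) :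
    spectrum ℝ (M.submatrix e e) = spectrum ℝ M :=
  AlgEquiv.spectrum_eq (Matrix.reindexAlgEquiv ℝ ℂ e.symm) M

lemma MatrixMonotoneOn.posSemidef_cfc_sub {f : ℝ → ℝ} {I : Set ℝ}
    (hf : MatrixMonotoneOn (Fintype.card ι) f I) {A B : Matrix ι ι ℂ} (hA : A.IsHermitian)
    (hB : B.IsHermitian) (hAI : spectrum ℝ A ⊆ I) (hBI : spectrum ℝ B ⊆ I)
    (hAB : (B - A).PosSemidef) : (cfc f B - cfc f A).PosSemidef := by
  set e := (Fintype.equivFin ι).symm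
  have h := hf _ _ (hA.submatrix e) (hB.submatrix e) (by rwa [spectrum_submatrix_equiv])
    (by rwa [spectrum_submatrix_equiv]) (hAB.submatrix e)
  rw [cfc_submatrix_equiv f hA, cfc_submatrix_equiv f hB] at h
  exact (posSemidef_submatrix_equiv e).1 h

end FunctionalCalculus

section Extrapolation

lemma degree_prod_one_add_X_mul_C_le {ι : Type*} (S : Finset ι) (x : ι → ℝ) :
    (∏ k ∈ S, (1 + Polynomial.X * Polynomial.C (x k))).degree ≤ (S.card : WithBot ℕ) := by
  refine (Polynomial.degree_prod_le _ _).trans ?_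
  have hfactor : ∀ k ∈ S, (1 + Polynomial.X * Polynomial.C (x k)).degree ≤ 1 := fun k _ => by
    compute_degree
  exact (Finset.sum_le_card_nsmul S _ 1 hfactor).trans_eq (nsmul_one _)

variable {ι κ : Type*} [Fintype ι] [DecidableEq κ] {J : Finset κ} {s : κ → ℝ} {σ : ℝ}

/-- Multiplying by `∏ i, (1 + x i X)` turns the functions `y ↦ (1 + y * x i)⁻¹` into polynomials of
degree less than `#J`, which Lagrange interpolation at the nodes `s j` reproduces. -/
lemma exists_extrapolation_coeff (hs : Set.InjOn s J) (hs0 : ∀ j ∈ J, 0 ≤ s j)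
    (hsσ : ∀ j ∈ J, s j ≤ σ) {x : ι → ℝ} (hx : ∀ i, 0 ≤ x i) (hcard : Fintype.card ι ≤ J.card) :
    ∃ β : κ → ℝ, (∀ j ∈ J, |β j| ≤ |(Lagrange.basis J s j).eval σ|) ∧
      ∀ i, (1 + σ * x i)⁻¹ = ∑ j ∈ J, β j * (1 + s j * x i)⁻¹ := by
  classical
  set P : ℝ → ℝ := fun y => ∏ i, (1 + y * x i)
  have hP : ∀ {y}, 0 ≤ y → 0 < P y := fun hy =>
    Finset.prod_pos fun i _ => by have := mul_nonneg hy (hx i); positivity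
  have hPmono : ∀ j ∈ J, P (s j) ≤ P σ := fun j hj =>
    Finset.prod_le_prod (fun i _ => by have := mul_nonneg (hs0 j hj) (hx i); positivity)
      fun i _ => by have := mul_le_mul_of_nonneg_right (hsσ j hj) (hx i); linarith
  refine ⟨fun j => (Lagrange.basis J s j).eval σ * (P (s j) / P σ), fun j hj => ?_, fun i => ?_⟩
  · have hratio : |P (s j) / P σ| ≤ 1 := by
      rw [abs_of_nonneg (div_nonneg (hP (hs0 j hj)).le ((hP (hs0 j hj)).le.trans (hPmono j hj)))]
      exact div_le_one_of_le₀ (hPmono j hj) ((hP (hs0 j hj)).le.trans (hPmono j hj))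
    rw [abs_mul]
    exact mul_le_of_le_one_right (abs_nonneg _) hratio
  · set N : Polynomial ℝ := ∏ k ∈ Finset.univ.erase i, (1 + Polynomial.X * Polynomial.C (x k))
    have hN : ∀ y, 0 ≤ y → N.eval y = P y * (1 + y * x i)⁻¹ := fun y hy => by
      have := mul_nonneg hy (hx i)
      rw [eq_mul_inv_iff_mul_eq₀ (by positivity), Polynomial.eval_prod]
      simp only [Polynomial.eval_add, Polynomial.eval_one, Polynomial.eval_mul, Polynomial.eval_X,
        Polynomial.eval_C]
      exact Finset.prod_erase_mul _ (fun k => 1 + y * x k) (Finset.mem_univ i)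
    have hdeg : N.degree < J.card := by
      refine (degree_prod_one_add_X_mul_C_le _ x).trans_lt ?_
      rw [Nat.cast_lt, Finset.card_erase_of_mem (Finset.mem_univ i), Finset.card_univ]
      exact (Nat.sub_lt (Fintype.card_pos_iff.2 ⟨i⟩) one_pos).trans_le hcard
    have hσ : 0 ≤ σ := by
      obtain ⟨j, hj⟩ : J.Nonempty := Finset.card_pos.1 ((Fintype.card_pos_iff.2 ⟨i⟩).trans_le hcard)
      exact (hs0 j hj).trans (hsσ j hj)
    have h := congrArg (Polynomial.eval σ) (Lagrange.eq_interpolate hs hdeg)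
    rw [Lagrange.interpolate_apply, Polynomial.eval_finsetSum, hN σ hσ] at h
    rw [← mul_right_inj' (hP hσ).ne', h, Finset.mul_sum]
    refine Finset.sum_congr rfl fun j hj => ?_
    have := hP hσ
    rw [Polynomial.eval_mul, Polynomial.eval_C, hN _ (hs0 j hj)]
    field_simp

end Extrapolation

section RankOneGap

variable {ι : Type*}

lemma isHermitian_vecMulVec_self_star (v : ι → ℂ) : (vecMulVec v (star v)).IsHermitian := by
  rw [IsHermitian, conjTranspose_vecMulVec, star_star]

/-- The Möbius transformation `t ↦ t / (p + q t)`. The two families `p = 1` and `q = 1` are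
exchanged by the transposition `g(t) ↦ t g(1 / t)`. -/
noncomputable def mobius (p q t : ℝ) : ℝ := t / (p + q * t)

variable [Fintype ι] [DecidableEq ι]

/-- The inverse `(p + q X)⁻¹` of a Hermitian matrix `X`, taken in the functional calculus so that
linear relations between the functions `(p + q t)⁻¹` carry over. -/
noncomputable def affineInv (p q : ℝ) (X : Matrix ι ι ℂ) : Matrix ι ι ℂ :=
  cfc (fun t => (p + q * t)⁻¹) X

variable {p q : ℝ} {A B X : Matrix ι ι ℂ} {v : ι → ℂ}

lemma isHermitian_affineInv (p q : ℝ) (X : Matrix ι ι ℂ) : (affineInv p q X).IsHermitian :=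
  isHermitian_cfc _ X

lemma affine_mul_affineInv (hX : X.IsHermitian) (hpq : ∀ t ∈ spectrum ℝ X, p + q * t ≠ 0) :
    (p • 1 + q • X) * affineInv p q X = 1 := by
  have haffine : cfc (fun t => p + q * t) X = p • 1 + q • X := by
    rw [cfc_const_add p _ X (continuousOn_spectrum _ X) hX.isSelfAdjoint,
      cfc_const_mul_id q X hX.isSelfAdjoint, Algebra.algebraMap_eq_smul_one]
  rw [← haffine, affineInv, ← cfc_mul _ _ X (continuousOn_spectrum _ X) (continuousOn_spectrum _ X),
    ← cfc_one ℝ X hX.isSelfAdjoint]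
  exact cfc_congr fun t ht => mul_inv_cancel₀ (hpq t ht)

lemma affineInv_mul_affine (hX : X.IsHermitian) (hpq : ∀ t ∈ spectrum ℝ X, p + q * t ≠ 0) :
    affineInv p q X * (p • 1 + q • X) = 1 :=
  mul_eq_one_comm.1 (affine_mul_affineInv hX hpq)

lemma cfc_mobius_eq_mul_affineInv (hX : X.IsHermitian) :
    cfc (mobius p q) X = X * affineInv p q X := by
  have h := cfc_mul (fun t => t) (fun t => (p + q * t)⁻¹) X (continuousOn_spectrum _ X)
    (continuousOn_spectrum _ X)
  rwa [cfc_id' ℝ X hX.isSelfAdjoint] at h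

lemma commute_affineInv (hX : X.IsHermitian) : Commute (affineInv p q X) X := by
  have h := cfc_commute_cfc (fun t => (p + q * t)⁻¹) (fun t => t) X
  rwa [cfc_id' ℝ X hX.isSelfAdjoint] at h

lemma cfc_mobius_sub_cfc_mobius (hA : A.IsHermitian) (hB : B.IsHermitian)
    (hpA : ∀ t ∈ spectrum ℝ A, p + q * t ≠ 0) (hpB : ∀ t ∈ spectrum ℝ B, p + q * t ≠ 0) :
    cfc (mobius p q) B - cfc (mobius p q) A =
      p • (affineInv p q A * (B - A) * affineInv p q B) := by
  set RA := affineInv p q A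
  set RB := affineInv p q B
  have hkB : cfc (mobius p q) B = RA * (p • 1 + q • A) * (B * RB) := by
    rw [affineInv_mul_affine hA hpA, one_mul, cfc_mobius_eq_mul_affineInv hB]
  have hkA : cfc (mobius p q) A = RA * A * ((p • 1 + q • B) * RB) := by
    rw [affine_mul_affineInv hB hpB, mul_one, cfc_mobius_eq_mul_affineInv hA, commute_affineInv hA]
  rw [hkA, hkB]
  simp only [mul_add, add_mul, mul_sub, sub_mul, smul_mul_assoc, mul_smul_comm, mul_one, one_mul,
    mul_assoc, smul_sub]
  abel

lemma affineInv_mulVec_eq_smul (hA : A.IsHermitian)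
    (hpA : ∀ t ∈ spectrum ℝ A, p + q * t ≠ 0)
    (hpB : ∀ t ∈ spectrum ℝ (A + vecMulVec v (star v)), p + q * t ≠ 0) :
    affineInv p q A *ᵥ v = (1 + q * (star v ⬝ᵥ affineInv p q A *ᵥ v)) •
        affineInv p q (A + vecMulVec v (star v)) *ᵥ v := by
  set u := affineInv p q A *ᵥ v with hu
  set B := A + vecMulVec v (star v) with hBdef
  have hB : B.IsHermitian := hA.add (isHermitian_vecMulVec_self_star v)
  have hBu : (p • 1 + q • B) *ᵥ u = (1 + q * (star v ⬝ᵥ u)) • v := by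
    have hAu : (p • 1 + q • A) *ᵥ u = v := by
      rw [hu, mulVec_mulVec, affine_mul_affineInv hA hpA, one_mulVec]
    rw [hBdef, smul_add, ← add_assoc, add_mulVec, hAu, smul_mulVec, vecMulVec_mulVec,
      op_smul_eq_smul, add_smul, one_smul, mul_smul, Complex.coe_smul]
  rw [← mulVec_smul, ← hBu, mulVec_mulVec, affineInv_mul_affine hB hpB, one_mulVec]

/-- The value `⟨v, (p + q A)⁻¹ v⟩`, real because `A` is Hermitian. -/
noncomputable def affineInvForm (p q : ℝ) (A : Matrix ι ι ℂ) (v : ι → ℂ) : ℝ :=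
  (star v ⬝ᵥ affineInv p q A *ᵥ v).re

lemma coe_affineInvForm : (affineInvForm p q A v : ℂ) = star v ⬝ᵥ affineInv p q A *ᵥ v :=
  Complex.ext rfl ((isHermitian_affineInv p q A).im_star_dotProduct_mulVec_self v).symm

lemma cfc_mobius_add_vecMulVec_sub (hA : A.IsHermitian)
    (hpA : ∀ t ∈ spectrum ℝ A, p + q * t ≠ 0)
    (hpB : ∀ t ∈ spectrum ℝ (A + vecMulVec v (star v)), p + q * t ≠ 0) :
    cfc (mobius p q) (A + vecMulVec v (star v)) - cfc (mobius p q) A =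
      (p / (1 + q * affineInvForm p q A v)) •
        vecMulVec (affineInv p q A *ᵥ v) (star (affineInv p q A *ᵥ v)) := by
  have hB : (A + vecMulVec v (star v)).IsHermitian := hA.add (isHermitian_vecMulVec_self_star v)
  rw [cfc_mobius_sub_cfc_mobius hA hB hpA hpB, add_sub_cancel_left]
  have hv := affineInv_mulVec_eq_smul hA hpA hpB
  rw [← coe_affineInvForm] at hv
  have hc : 1 + q * affineInvForm p q A v ≠ 0 := by
    intro hc
    have hu : affineInv p q A *ᵥ v = 0 := by
      rw [hv, ← Complex.ofReal_mul, ← Complex.ofReal_one, ← Complex.ofReal_add, hc,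
        Complex.ofReal_zero, zero_smul]
    simp [affineInvForm, hu] at hc
  have hRB : affineInv p q (A + vecMulVec v (star v)) *ᵥ v =
      (1 + q * affineInvForm p q A v)⁻¹ • affineInv p q A *ᵥ v := by
    rw [eq_inv_smul_iff₀ hc, hv, ← Complex.coe_smul]
    push_cast
    rfl
  have hstar : star v ᵥ* affineInv p q (A + vecMulVec v (star v)) =
      (1 + q * affineInvForm p q A v)⁻¹ • star (affineInv p q A *ᵥ v) := by
    rw [← star_trivial (1 + q * affineInvForm p q A v)⁻¹, ← star_smul, ← hRB, star_mulVec,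
      (isHermitian_affineInv p q _).eq]
  rw [mul_vecMulVec, vecMulVec_mul, hstar, vecMulVec_smul, smul_smul, div_eq_mul_inv]

lemma re_dotProduct_cfc_mobius_add_vecMulVec_sub (hA : A.IsHermitian)
    (hpA : ∀ t ∈ spectrum ℝ A, p + q * t ≠ 0)
    (hpB : ∀ t ∈ spectrum ℝ (A + vecMulVec v (star v)), p + q * t ≠ 0) (x : ι → ℂ) :
    (star x ⬝ᵥ (cfc (mobius p q) (A + vecMulVec v (star v)) - cfc (mobius p q) A) *ᵥ x).re =
      p / (1 + q * affineInvForm p q A v) * ‖star x ⬝ᵥ affineInv p q A *ᵥ v‖ ^ 2 := by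
  set u := affineInv p q A *ᵥ v with hu
  have hstar : star u ⬝ᵥ x = star (star x ⬝ᵥ u) := by rw [← star_dotProduct_star, star_star]
  rw [cfc_mobius_add_vecMulVec_sub hA hpA hpB, smul_mulVec, vecMulVec_mulVec, op_smul_eq_smul,
    dotProduct_smul, dotProduct_smul, smul_eq_mul, Complex.smul_re, smul_eq_mul, ← hu, hstar,
    mul_comm (star _), Complex.star_def, Complex.mul_conj, Complex.ofReal_re,
    Complex.normSq_eq_norm_sq]

end RankOneGap

section MatrixMonotonicity

variable {ι κ : Type*} [Fintype ι] [DecidableEq ι] {A : Matrix ι ι ℂ} {v : ι → ℂ}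

open scoped MatrixOrder in
lemma re_dotProduct_cfc_mulVec_mono {f g : ℝ → ℝ} (hfg : ∀ t ∈ spectrum ℝ A, f t ≤ g t)
    (v : ι → ℂ) : (star v ⬝ᵥ cfc f A *ᵥ v).re ≤ (star v ⬝ᵥ cfc g A *ᵥ v).re := by
  have hle : (cfc g A - cfc f A).PosSemidef :=
    cfc_mono hfg (continuousOn_spectrum f A) (continuousOn_spectrum g A)
  have h := hle.re_dotProduct_nonneg v
  rw [sub_mulVec, dotProduct_sub, map_sub, sub_nonneg] at h
  exact h

lemma mul_affineInvForm_mono (hA : A.PosSemidef) {s σ : ℝ} (hs : 0 ≤ s) (hsσ : s ≤ σ) :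
    s * affineInvForm 1 s A v ≤ σ * affineInvForm 1 σ A v := by
  have hform : ∀ r : ℝ, r * affineInvForm 1 r A v =
      (star v ⬝ᵥ cfc (fun t => r * (1 + r * t)⁻¹) A *ᵥ v).re := fun r => by
    rw [cfc_const_mul r _ A (continuousOn_spectrum _ A), smul_mulVec, dotProduct_smul,
      Complex.smul_re, smul_eq_mul]
    rfl
  rw [hform, hform]
  refine re_dotProduct_cfc_mulVec_mono (fun t ht => ?_) v
  have ht0 : 0 ≤ t := (spectrum_subset_Ici_zero_iff hA.isHermitian).2 hA ht
  have hσ := hs.trans hsσ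
  rw [← div_eq_mul_inv, ← div_eq_mul_inv, div_le_div_iff₀ (by positivity) (by positivity)]
  linarith

lemma mul_affineInvForm_nonneg (hA : A.PosSemidef) {s : ℝ} (hs : 0 ≤ s) :
    0 ≤ s * affineInvForm 1 s A v := by
  simpa only [zero_mul] using mul_affineInvForm_mono (v := v) hA le_rfl hs

/-- The sum of the Möbius transformations `t / (1 + s j * t)` over `j ∈ J`, perturbed by `-ε` times
the one with parameter `σ`. -/
noncomputable def mobiusPerturbation (J : Finset κ) (s : κ → ℝ) (ε σ t : ℝ) : ℝ :=
  ∑ j ∈ J, mobius 1 (s j) t - ε * mobius 1 σ t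

variable {J : Finset κ} {s : κ → ℝ} {ε σ : ℝ}

lemma cfc_sum_sub_const_mul (f : κ → ℝ → ℝ) (g : ℝ → ℝ) (ε : ℝ) (X : Matrix ι ι ℂ) :
    cfc (fun t => ∑ j ∈ J, f j t - ε * g t) X = ∑ j ∈ J, cfc (f j) X - ε • cfc g X := by
  have hcont := fun f : ℝ → ℝ => continuousOn_spectrum f X
  rw [← cfc_const_mul _ _ _ (hcont _), ← cfc_sum _ _ _ fun j _ => hcont _,
    ← cfc_sub _ _ X (hcont _) (hcont _)]
  simp only [Finset.sum_apply]

lemma re_dotProduct_cfc_sum_sub_const_mul_gap (f : κ → ℝ → ℝ) (g : ℝ → ℝ) (ε : ℝ)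
    (A B : Matrix ι ι ℂ) (x : ι → ℂ) :
    (star x ⬝ᵥ (cfc (fun t => ∑ j ∈ J, f j t - ε * g t) B -
        cfc (fun t => ∑ j ∈ J, f j t - ε * g t) A) *ᵥ x).re =
      ∑ j ∈ J, (star x ⬝ᵥ (cfc (f j) B - cfc (f j) A) *ᵥ x).re -
        ε * (star x ⬝ᵥ (cfc g B - cfc g A) *ᵥ x).re := by
  rw [cfc_sum_sub_const_mul, cfc_sum_sub_const_mul, sub_sub_sub_comm, ← Finset.sum_sub_distrib,
    ← smul_sub, sub_mulVec, dotProduct_sub, sum_mulVec, dotProduct_sum, smul_mulVec,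
    dotProduct_smul, Complex.sub_re, Complex.re_sum, Complex.smul_re, smul_eq_mul]

lemma sq_norm_sum_mul_le {β L : κ → ℝ} (hβ : ∀ j ∈ J, |β j| ≤ |L j|) (z : κ → ℂ) :
    ‖∑ j ∈ J, β j * z j‖ ^ 2 ≤ (∑ j ∈ J, L j ^ 2) * ∑ j ∈ J, ‖z j‖ ^ 2 := by
  calc ‖∑ j ∈ J, β j * z j‖ ^ 2 ≤ (∑ j ∈ J, |β j| * ‖z j‖) ^ 2 := by
        gcongr
        exact (norm_sum_le _ _).trans_eq (by simp)
    _ ≤ (∑ j ∈ J, |L j| * ‖z j‖) ^ 2 := by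
        gcongr ?_ ^ 2
        exact Finset.sum_le_sum fun j hj => mul_le_mul_of_nonneg_right (hβ j hj) (norm_nonneg _)
    _ ≤ (∑ j ∈ J, |L j| ^ 2) * ∑ j ∈ J, ‖z j‖ ^ 2 := Finset.sum_mul_sq_le_sq_mul_sq _ _ _
    _ = _ := by simp only [sq_abs]

variable [DecidableEq κ]

lemma exists_affineInv_eq_sum (hs : Set.InjOn s J) (hs0 : ∀ j ∈ J, 0 ≤ s j)
    (hsσ : ∀ j ∈ J, s j ≤ σ) (hcard : Fintype.card ι ≤ J.card) (hA : A.PosSemidef) :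
    ∃ β : κ → ℝ, (∀ j ∈ J, |β j| ≤ |(Lagrange.basis J s j).eval σ|) ∧
      affineInv 1 σ A = ∑ j ∈ J, β j • affineInv 1 (s j) A := by
  obtain ⟨β, hβ, hsum⟩ := exists_extrapolation_coeff hs hs0 hsσ hA.eigenvalues_nonneg hcard
  refine ⟨β, hβ, ?_⟩
  have hcont := fun f : ℝ → ℝ => continuousOn_spectrum f A
  simp only [affineInv, ← cfc_const_mul _ _ _ (hcont _)]
  rw [← cfc_sum _ _ _ fun j _ => hcont _]
  refine cfc_congr fun t ht => ?_
  rw [hA.isHermitian.spectrum_real_eq_range_eigenvalues] at ht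
  obtain ⟨i, rfl⟩ := ht
  simpa only [Finset.sum_apply] using hsum i

lemma one_add_mul_ne_zero_of_mem_spectrum (hA : A.PosSemidef) {r : ℝ} (hr : 0 ≤ r) :
    ∀ t ∈ spectrum ℝ A, 1 + r * t ≠ 0 := fun t ht => by
  have ht0 : 0 ≤ t := (spectrum_subset_Ici_zero_iff hA.isHermitian).2 hA ht
  positivity

lemma mul_sq_norm_dotProduct_affineInv_le_sum (hs : Set.InjOn s J) (hs0 : ∀ j ∈ J, 0 ≤ s j)
    (hsσ : ∀ j ∈ J, s j ≤ σ) (hcard : Fintype.card ι ≤ J.card) (hε : 0 ≤ ε)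
    (hεJ : ε * ∑ j ∈ J, (Lagrange.basis J s j).eval σ ^ 2 ≤ 1) (hA : A.PosSemidef) (v x : ι → ℂ) :
    ε * ‖star x ⬝ᵥ affineInv 1 σ A *ᵥ v‖ ^ 2 ≤
      ∑ j ∈ J, ‖star x ⬝ᵥ affineInv 1 (s j) A *ᵥ v‖ ^ 2 := by
  obtain ⟨β, hβ, hβσ⟩ := exists_affineInv_eq_sum hs hs0 hsσ hcard hA
  have hsum : star x ⬝ᵥ affineInv 1 σ A *ᵥ v =
      ∑ j ∈ J, β j * (star x ⬝ᵥ affineInv 1 (s j) A *ᵥ v) := by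
    simp only [hβσ, sum_mulVec, dotProduct_sum, smul_mulVec, dotProduct_smul, Complex.real_smul]
  calc ε * ‖star x ⬝ᵥ affineInv 1 σ A *ᵥ v‖ ^ 2
      ≤ ε * ((∑ j ∈ J, (Lagrange.basis J s j).eval σ ^ 2) *
          ∑ j ∈ J, ‖star x ⬝ᵥ affineInv 1 (s j) A *ᵥ v‖ ^ 2) := by
        rw [hsum]
        gcongr
        exact sq_norm_sum_mul_le hβ _
    _ ≤ ∑ j ∈ J, ‖star x ⬝ᵥ affineInv 1 (s j) A *ᵥ v‖ ^ 2 := by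
        rw [← mul_assoc]
        exact mul_le_of_le_one_left (by positivity) hεJ

lemma posSemidef_cfc_mobiusPerturbation_add_vecMulVec_sub (hs : Set.InjOn s J)
    (hs0 : ∀ j ∈ J, 0 ≤ s j) (hsσ : ∀ j ∈ J, s j ≤ σ) (hσ : 0 ≤ σ) (hcard : Fintype.card ι ≤ J.card)
    (hε : 0 ≤ ε) (hεJ : ε * ∑ j ∈ J, (Lagrange.basis J s j).eval σ ^ 2 ≤ 1)
    (hA : A.PosSemidef) (v : ι → ℂ) :
    (cfc (mobiusPerturbation J s ε σ) (A + vecMulVec v (star v)) -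
      cfc (mobiusPerturbation J s ε σ) A).PosSemidef := by
  have hB : (A + vecMulVec v (star v)).PosSemidef := hA.add (posSemidef_vecMulVec_self_star v)
  refine posSemidef_of_re_dotProduct_nonneg ((isHermitian_cfc _ _).sub (isHermitian_cfc _ _))
    fun x => ?_
  set z : ℝ → ℂ := fun r => star x ⬝ᵥ affineInv 1 r A *ᵥ v
  set d : ℝ → ℝ := fun r => 1 + r * affineInvForm 1 r A v
  have hgap : ∀ {r : ℝ}, 0 ≤ r → (star x ⬝ᵥ (cfc (mobius 1 r) (A + vecMulVec v (star v)) -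
      cfc (mobius 1 r) A) *ᵥ x).re = ‖z r‖ ^ 2 / d r := fun hr => by
    rw [re_dotProduct_cfc_mobius_add_vecMulVec_sub hA.isHermitian
      (one_add_mul_ne_zero_of_mem_spectrum hA hr) (one_add_mul_ne_zero_of_mem_spectrum hB hr),
      one_div_mul_eq_div]
  have hd0 : ∀ {r}, 0 ≤ r → 0 < d r := fun hr =>
    add_pos_of_pos_of_nonneg one_pos (mul_affineInvForm_nonneg hA hr)
  have hdσ : ∀ j ∈ J, d (s j) ≤ d σ := fun j hj =>
    add_le_add_right (mul_affineInvForm_mono hA (hs0 j hj) (hsσ j hj)) 1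
  refine (sub_nonneg.2 ?_).trans_eq (re_dotProduct_cfc_sum_sub_const_mul_gap _ _ ε A _ x).symm
  rw [hgap hσ, Finset.sum_congr rfl fun j hj => hgap (hs0 j hj)]
  calc ε * (‖z σ‖ ^ 2 / d σ) = ε * ‖z σ‖ ^ 2 / d σ := (mul_div_assoc _ _ _).symm
    _ ≤ (∑ j ∈ J, ‖z (s j)‖ ^ 2) / d σ := by
        gcongr
        · exact (hd0 hσ).le
        · exact mul_sq_norm_dotProduct_affineInv_le_sum hs hs0 hsσ hcard hε hεJ hA v x
    _ = ∑ j ∈ J, ‖z (s j)‖ ^ 2 / d σ := Finset.sum_div _ _ _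
    _ ≤ ∑ j ∈ J, ‖z (s j)‖ ^ 2 / d (s j) := Finset.sum_le_sum fun j hj =>
        div_le_div_of_nonneg_left (by positivity) (hd0 (hs0 j hj)) (hdσ j hj)

theorem matrixMonotoneOn_mobiusPerturbation {n : ℕ} (hs : Set.InjOn s J)
    (hs0 : ∀ j ∈ J, 0 ≤ s j) (hsσ : ∀ j ∈ J, s j ≤ σ) (hσ : 0 ≤ σ) (hcard : n ≤ J.card)
    (hε : 0 ≤ ε) (hεJ : ε * ∑ j ∈ J, (Lagrange.basis J s j).eval σ ^ 2 ≤ 1) :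
    MatrixMonotoneOn n (mobiusPerturbation J s ε σ) (Ici 0) := by
  intro A B hA _ hAI _ hAB
  obtain ⟨m, v, hv⟩ := posSemidef_iff_eq_sum_vecMulVec.1 hAB
  have hA0 : A.PosSemidef := (spectrum_subset_Ici_zero_iff hA).1 hAI
  suffices h : ∀ T : Finset (Fin m),
      (cfc (mobiusPerturbation J s ε σ) (A + ∑ i ∈ T, vecMulVec (v i) (star (v i))) -
        cfc (mobiusPerturbation J s ε σ) A).PosSemidef by
    simpa [← hv] using h Finset.univ
  intro T
  induction T using Finset.induction_on with
  | empty => simpa using PosSemidef.zero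
  | insert i T hi ih =>
    have hT : (A + ∑ i ∈ T, vecMulVec (v i) (star (v i))).PosSemidef :=
      hA0.add (posSemidef_sum _ fun i _ => posSemidef_vecMulVec_self_star (v i))
    have hstep := posSemidef_cfc_mobiusPerturbation_add_vecMulVec_sub hs hs0 hsσ hσ
      (by simpa using hcard) hε hεJ hT (v i)
    rw [Finset.sum_insert hi, add_comm (vecMulVec _ _), ← add_assoc]
    simpa only [sub_add_sub_cancel] using hstep.add ih

end MatrixMonotonicity

section Transposition

variable {ι κ : Type*}

lemma posDef_fromBlocks_zero [Finite ι] [Finite κ] {X : Matrix ι ι ℂ} {Y : Matrix κ κ ℂ}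
    (hX : X.PosDef) (hY : Y.PosDef) : (fromBlocks X 0 0 Y).PosDef := by
  cases nonempty_fintype ι
  cases nonempty_fintype κ
  classical
  have := hX.isUnit.invertible
  have h := PosDef.fromBlocks₁₁ (0 : Matrix ι κ ℂ) Y hX
  simp only [conjTranspose_zero, Matrix.zero_mul, Matrix.mul_zero, sub_zero] at h
  rw [(h.2 hY.posSemidef).posDef_iff_isUnit, isUnit_iff_isUnit_det, det_fromBlocks_zero₂₁]
  exact ((isUnit_iff_isUnit_det _).1 hX.isUnit).mul ((isUnit_iff_isUnit_det _).1 hY.isUnit)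

variable [Fintype ι] [Fintype κ]

lemma conjTranspose_fromRows_mul_fromBlocks_mul_fromRows (U V X Y : Matrix ι ι ℂ) :
    (fromRows U V)ᴴ * fromBlocks X 0 0 Y * fromRows U V = Uᴴ * X * U + Vᴴ * Y * V := by
  rw [conjTranspose_fromRows_eq_fromCols_conjTranspose, Matrix.mul_assoc,
    fromBlocks_mul_fromRows, fromCols_mul_fromRows]
  simp only [Matrix.zero_mul, add_zero, zero_add, Matrix.mul_assoc]

variable [DecidableEq ι] [DecidableEq κ]

lemma cfc_fromBlocks (f : ℝ → ℝ) {X : Matrix ι ι ℂ} {Y : Matrix κ κ ℂ} (hX : X.IsHermitian)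
    (hY : Y.IsHermitian) :
    cfc f (fromBlocks X 0 0 Y) = fromBlocks (cfc f X) 0 0 (cfc f Y) := by
  have hXY : (fromBlocks X 0 0 Y).IsHermitian := hX.fromBlocks (by simp) hY
  have hfst : cfc f (fromBlocks X 0 0 Y) * fromRows (1 : Matrix ι ι ℂ) (0 : Matrix κ ι ℂ) =
      fromRows (1 : Matrix ι ι ℂ) (0 : Matrix κ ι ℂ) * cfc f X :=
    cfc_mul_eq_mul_cfc f hXY hX (by rw [fromBlocks_mul_fromRows, fromRows_mul]; simp)
  have hsnd : cfc f (fromBlocks X 0 0 Y) * fromRows (0 : Matrix ι κ ℂ) (1 : Matrix κ κ ℂ) =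
      fromRows (0 : Matrix ι κ ℂ) (1 : Matrix κ κ ℂ) * cfc f Y :=
    cfc_mul_eq_mul_cfc f hXY hY (by rw [fromBlocks_mul_fromRows, fromRows_mul]; simp)
  rw [← Matrix.mul_one (cfc f (fromBlocks X 0 0 Y)), ← fromBlocks_one,
    ← fromCols_fromRows_eq_fromBlocks 1, mul_fromCols, hfst, hsnd, fromRows_mul, fromRows_mul]
  simp [fromCols_fromRows_eq_fromBlocks]

/-- For the projections `P = W Wᴴ` and `Q = 1 - P`, the matrix
`M = (1 + η) P X P + (1 + η⁻¹) Q X Q` dominates `X` and is block diagonal, so `h(M)` compresses to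
`h` of the compression of `M`. -/
lemma MatrixMonotoneOn.posSemidef_cfc_compression_sub {h : ℝ → ℝ}
    (hh : MatrixMonotoneOn (Fintype.card κ) h (Ioi 0)) {X : Matrix κ κ ℂ} (hX : X.PosDef)
    {W : Matrix κ ι ℂ} (hW : Wᴴ * W = 1) {η : ℝ} (hη : 0 < η) :
    (cfc h ((1 + η) • (Wᴴ * X * W)) - Wᴴ * cfc h X * W).PosSemidef := by
  set P := W * Wᴴ with hP
  set Q := 1 - P with hQ
  set M := (1 + η) • (P * X * P) + (1 + η⁻¹) • (Q * X * Q) with hM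
  have hPW : P * W = W := by rw [hP, Matrix.mul_assoc, hW, Matrix.mul_one]
  have hQW : Q * W = 0 := by rw [hQ, Matrix.sub_mul, Matrix.one_mul, hPW, sub_self]
  have hMX : M - X = η⁻¹ • ((η • P - Q) * X * (η • P - Q)) := by
    have hPQ1 : P + Q = 1 := add_sub_cancel P 1
    calc M - X = M - (P + Q) * X * (P + Q) := by rw [hPQ1, Matrix.one_mul, Matrix.mul_one]
      _ = _ := by
        simp only [hM, add_mul, mul_add, sub_mul, mul_sub, smul_mul_assoc, mul_smul_comm]
        match_scalars <;> field_simp <;> ring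
  have hPQ : (η • P - Q).IsHermitian := by
    have hP' : P.IsHermitian := isHermitian_mul_conjTranspose_self W
    exact (hP'.smul (.all η)).sub (isHermitian_one.sub hP')
  have hMX0 : (M - X).PosSemidef := by
    have h0 := (hX.posSemidef.conjTranspose_mul_mul_same (η • P - Q)).smul (inv_nonneg.2 hη.le)
    rwa [hPQ.eq, ← hMX] at h0
  have hMpos : M.PosDef := by simpa using hX.add_posSemidef hMX0
  have hMW : M * W = W * ((1 + η) • (Wᴴ * X * W)) := by
    simp only [hM, Matrix.add_mul, Matrix.smul_mul, Matrix.mul_smul, Matrix.mul_assoc, hPW, hQW,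
      Matrix.mul_zero, smul_zero, add_zero]
    simp only [hP, Matrix.mul_assoc]
  have hY : ((1 + η) • (Wᴴ * X * W)).IsHermitian :=
    (isHermitian_conjTranspose_mul_mul W hX.isHermitian).smul (.all _)
  have hle := (hh.posSemidef_cfc_sub hX.isHermitian hMpos.isHermitian
    ((spectrum_subset_Ioi_zero_iff hX.isHermitian).2 hX)
    ((spectrum_subset_Ioi_zero_iff hMpos.isHermitian).2 hMpos) hMX0).conjTranspose_mul_mul_same W
  rwa [Matrix.mul_sub, Matrix.sub_mul, Matrix.mul_assoc _ _ W,
    cfc_mul_eq_mul_cfc h hMpos.isHermitian hY hMW, ← Matrix.mul_assoc, hW, Matrix.one_mul] at hle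

lemma cfc_const_mul_inv_mul {A : Matrix ι ι ℂ} (hA : A.PosDef) (r : ℝ) :
    cfc (fun t => t * (r * t⁻¹)) A = r • 1 := by
  rw [← Algebra.algebraMap_eq_smul_one, ← cfc_const r A hA.isHermitian.isSelfAdjoint]
  refine cfc_congr fun t ht => ?_
  have ht0 : t ≠ 0 := ((spectrum_subset_Ioi_zero_iff hA.isHermitian).2 hA ht).ne'
  field_simp

lemma MatrixMonotoneOn.posSemidef_cfc_sub_conj {h : ℝ → ℝ}
    (hh : MatrixMonotoneOn (Fintype.card κ) h (Ioi 0)) {X : Matrix κ κ ℂ}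
    (hX : X.PosDef) {V : Matrix κ ι ℂ} (hV : (Vᴴ * V).PosDef) {r : ℝ} (hVX : Vᴴ * X * V = r • 1)
    {η : ℝ} (hη : 0 < η) :
    (cfc (fun t => t * h ((1 + η) * r * t⁻¹)) (Vᴴ * V) - Vᴴ * cfc h X * V).PosSemidef := by
  set C := Vᴴ * V with hC
  set K := cfc Real.sqrt C
  set G := cfc (fun t => (√t)⁻¹) C
  have hKG : K * G = 1 := cfc_sqrt_mul_cfc_sqrt_inv hV
  have hGK : G * K = 1 := mul_eq_one_comm.1 hKG
  have hKh : Kᴴ = K := isHermitian_cfc _ C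
  have hGh : Gᴴ = G := isHermitian_cfc _ C
  have hisometry : (V * G)ᴴ * (V * G) = 1 := by
    calc (V * G)ᴴ * (V * G) = G * C * G := by
          rw [conjTranspose_mul, hGh, hC]; simp only [Matrix.mul_assoc]
      _ = G * K * (K * G) := by
          rw [← mul_assoc, mul_assoc G K K, cfc_sqrt_mul_cfc_sqrt hV.posSemidef]
      _ = 1 := by rw [hGK, hKG, one_mul]
  have hcompression : (1 + η) • ((V * G)ᴴ * X * (V * G)) =
      cfc (fun t => (1 + η) * r * t⁻¹) C := by
    calc (1 + η) • ((V * G)ᴴ * X * (V * G)) = (1 + η) • (G * (Vᴴ * X * V) * G) := by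
          rw [conjTranspose_mul, hGh]; simp only [Matrix.mul_assoc]
      _ = ((1 + η) * r) • (G * G) := by
          rw [hVX, mul_smul_comm, smul_mul_assoc, mul_one, smul_smul]
      _ = cfc (fun t => (1 + η) * r * t⁻¹) C := by
          rw [cfc_sqrt_inv_mul_cfc_sqrt_inv hV, cfc_const_mul _ _ C (continuousOn_spectrum _ C)]
  have hle := (hh.posSemidef_cfc_compression_sub hX hisometry hη).conjTranspose_mul_mul_same K
  rw [hcompression, cfc_cfc hV.isHermitian, hKh, Matrix.mul_sub, Matrix.sub_mul,
    cfc_sqrt_mul_cfc_mul_cfc_sqrt hV.posSemidef] at hle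
  convert hle using 2
  calc Vᴴ * cfc h X * V = K * G * (Vᴴ * cfc h X * V) * (G * K) := by
        rw [hKG, hGK, Matrix.one_mul, Matrix.mul_one]
    _ = K * ((V * G)ᴴ * cfc h X * (V * G)) * K := by
        rw [conjTranspose_mul, hGh]; simp only [Matrix.mul_assoc]

lemma MatrixMonotoneOn.posSemidef_cfc_add_sub {h : ℝ → ℝ}
    (hh : MatrixMonotoneOn (2 * Fintype.card ι) h (Ioi 0)) (hh0 : ∀ t, 0 < t → 0 ≤ h t)
    {A D : Matrix ι ι ℂ} (hA : A.PosDef) (hD : D.PosDef) {δ : ℝ} (hδ : 0 < δ) :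
    (cfc (fun t => t * h ((1 + δ) ^ 2 * t⁻¹)) (A + D) -
      cfc (fun t => t * h t⁻¹) A).PosSemidef := by
  set V := fromRows (cfc Real.sqrt A) (cfc Real.sqrt D) with hV
  have hconj : ∀ f g : ℝ → ℝ, Vᴴ * fromBlocks (cfc f A) 0 0 (cfc g D) * V =
      cfc (fun t => t * f t) A + cfc (fun t => t * g t) D := fun f g => by
    rw [hV, conjTranspose_fromRows_mul_fromBlocks_mul_fromRows, (isHermitian_cfc _ A).eq,
      (isHermitian_cfc _ D).eq, cfc_sqrt_mul_cfc_mul_cfc_sqrt hA.posSemidef,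
      cfc_sqrt_mul_cfc_mul_cfc_sqrt hD.posSemidef]
  have hVV : Vᴴ * V = A + D := by
    rw [hV, conjTranspose_fromRows_eq_fromCols_conjTranspose, fromCols_mul_fromRows,
      (isHermitian_cfc _ A).eq, (isHermitian_cfc _ D).eq, cfc_sqrt_mul_cfc_sqrt hA.posSemidef,
      cfc_sqrt_mul_cfc_sqrt hD.posSemidef]
  have hVX : Vᴴ * fromBlocks (cfc (fun t : ℝ => 1 * t⁻¹) A) 0 0 (cfc (fun t : ℝ => δ * t⁻¹) D) * V =
      (1 + δ) • 1 := by
    rw [hconj, cfc_const_mul_inv_mul hA, cfc_const_mul_inv_mul hD, add_smul]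
  have hA0 : ∀ t ∈ spectrum ℝ A, 0 < t := (spectrum_subset_Ioi_zero_iff hA.isHermitian).2 hA
  have hD0 : ∀ t ∈ spectrum ℝ D, 0 < t := (spectrum_subset_Ioi_zero_iff hD.isHermitian).2 hD
  have hX := posDef_fromBlocks_zero
    (posDef_cfc hA.isHermitian fun t ht => mul_pos one_pos (inv_pos.2 (hA0 t ht)))
    (posDef_cfc hD.isHermitian fun t ht => mul_pos hδ (inv_pos.2 (hD0 t ht)))
  rw [two_mul, ← Fintype.card_sum] at hh
  have hle := hh.posSemidef_cfc_sub_conj hX (hVV ▸ hA.add_posSemidef hD.posSemidef) hVX hδ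
  rw [cfc_fromBlocks h (isHermitian_cfc _ A) (isHermitian_cfc _ D), cfc_cfc hA.isHermitian,
    cfc_cfc hD.isHermitian, hconj, hVV] at hle
  have hdrop : (cfc (fun t => t * h (δ * t⁻¹)) D).PosSemidef :=
    posSemidef_cfc hD.isHermitian fun t ht =>
      mul_nonneg (hD0 t ht).le (hh0 _ (mul_pos hδ (inv_pos.2 (hD0 t ht))))
  simpa only [one_mul, ← sq, sub_add_eq_sub_sub, sub_add_cancel] using hle.add hdrop

lemma MatrixMonotoneOn.posSemidef_const_smul_cfc_sub {h : ℝ → ℝ}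
    (hh : MatrixMonotoneOn (2 * Fintype.card ι) h (Ioi 0)) (hh0 : ∀ t, 0 < t → 0 ≤ h t)
    {A B : Matrix ι ι ℂ} (hA : A.PosDef) (hB : B.PosDef) (hAB : (B - A).PosSemidef) {δ : ℝ}
    (hδ : 0 < δ) :
    ((1 + δ) ^ 2 • cfc (fun t => t * h t⁻¹) B - cfc (fun t => t * h t⁻¹) A).PosSemidef := by
  set r := (1 + δ) ^ 2 with hr
  have hr1 : 0 < r - 1 := by rw [hr]; nlinarith
  have hr0 : r ≠ 0 := by positivity
  have hD : (r • B - A).PosDef := by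
    have h := (hB.smul hr1).add_posSemidef hAB
    rwa [sub_smul, one_smul, sub_add_sub_cancel] at h
  have hle := hh.posSemidef_cfc_add_sub hh0 hA hD hδ
  rw [add_sub_cancel] at hle
  convert hle using 2
  rw [← cfc_const_mul r _ B (continuousOn_spectrum _ B), ← cfc_const_mul_id r B
    hB.isHermitian.isSelfAdjoint, cfc_cfc hB.isHermitian]
  refine cfc_congr fun t _ => ?_
  rw [mul_inv, ← hr, mul_inv_cancel_left₀ hr0, mul_assoc]

theorem MatrixMonotoneOn.mul_comp_inv {n : ℕ} {h : ℝ → ℝ}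
    (hh : MatrixMonotoneOn (2 * n) h (Ioi 0)) (hh0 : ∀ t, 0 < t → 0 ≤ h t) :
    MatrixMonotoneOn n (fun t => t * h t⁻¹) (Ioi 0) := by
  intro A B hA hB hAI hBI hAB
  set g : ℝ → ℝ := fun t => t * h t⁻¹
  refine posSemidef_of_re_dotProduct_nonneg ((isHermitian_cfc _ _).sub (isHermitian_cfc _ _))
    fun x => ?_
  have hδ : ∀ δ : ℝ, 0 < δ →
      0 ≤ (1 + δ) ^ 2 * (star x ⬝ᵥ cfc g B *ᵥ x).re - (star x ⬝ᵥ cfc g A *ᵥ x).re := fun δ hδ => by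
    have h := (MatrixMonotoneOn.posSemidef_const_smul_cfc_sub (by simpa using hh) hh0
      ((spectrum_subset_Ioi_zero_iff hA).1 hAI) ((spectrum_subset_Ioi_zero_iff hB).1 hBI)
      hAB hδ).re_dotProduct_nonneg x
    rwa [sub_mulVec, dotProduct_sub, smul_mulVec, dotProduct_smul, map_sub, RCLike.re_eq_complex_re,
      Complex.smul_re, smul_eq_mul] at h
  have hlim : Filter.Tendsto (fun δ : ℝ => (1 + δ) ^ 2 * (star x ⬝ᵥ cfc g B *ᵥ x).re -
      (star x ⬝ᵥ cfc g A *ᵥ x).re) (nhdsWithin 0 (Ioi 0))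
      (nhds ((1 + 0) ^ 2 * (star x ⬝ᵥ cfc g B *ᵥ x).re - (star x ⬝ᵥ cfc g A *ᵥ x).re)) :=
    (Continuous.tendsto (by fun_prop) 0).mono_left nhdsWithin_le_nhds
  have h := ge_of_tendsto hlim (eventually_mem_nhdsWithin.mono hδ)
  rwa [add_zero, one_pow, one_mul, ← Complex.sub_re, ← dotProduct_sub, ← sub_mulVec] at h

end Transposition

section Violation

variable {ι κ : Type*} [Fintype ι]

lemma exists_sum_mul_inv_eq {a : ι → ℝ} (ha : a.Injective) {P : Polynomial ℝ}
    (hP : P.degree < Fintype.card ι) :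
    ∃ x : ι → ℝ, ∀ s, (∀ i, s + a i ≠ 0) →
      ∑ i, x i * (s + a i)⁻¹ = P.eval s / ∏ i, (s + a i) := by
  classical
  have hnodes : Set.InjOn (-a) (Finset.univ : Finset ι) := (neg_injective.comp ha).injOn
  refine ⟨fun i => Lagrange.nodalWeight Finset.univ (-a) i * P.eval (-a i), fun s hs => ?_⟩
  have h := Lagrange.eval_interpolate_not_at_node (s := Finset.univ) (v := -a)
    (fun i => P.eval (-a i)) (x := s) fun i _ => by
      simpa [eq_neg_iff_add_eq_zero] using hs i
  have hP' : Lagrange.interpolate Finset.univ (-a) (fun i => P.eval (-a i)) = P :=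
    (Lagrange.eq_interpolate hnodes hP).symm
  rw [hP', Lagrange.eval_nodal] at h
  simp only [Pi.neg_apply, sub_neg_eq_add] at h
  rw [h, mul_div_cancel_left₀ _ (Finset.prod_ne_zero_iff.2 fun i _ => hs i)]
  exact Finset.sum_congr rfl fun i _ => mul_right_comm _ _ _

variable [DecidableEq ι]

lemma affineInv_diagonal {p q : ℝ} {a : ι → ℝ} (hpq : ∀ i, p + q * a i ≠ 0) :
    affineInv p q (diagonal fun i => (a i : ℂ)) =
      diagonal fun i => (((p + q * a i)⁻¹ : ℝ) : ℂ) := by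
  set X : Matrix ι ι ℂ := diagonal fun i => (a i : ℂ) with hXdef
  have hX : X.IsHermitian := isHermitian_diagonal_of_self_adjoint _ (by ext; simp)
  have hspectrum : ∀ t ∈ spectrum ℝ X, p + q * t ≠ 0 := fun t ht => by
    have ht' : (t : ℂ) ∈ spectrum ℂ X := (spectrum.algebraMap_mem_iff ℂ).2 ht
    rw [hXdef, spectrum_diagonal] at ht'
    obtain ⟨i, hi⟩ := ht'
    exact Complex.ofReal_injective hi ▸ hpq i
  refine left_inv_eq_right_inv (affineInv_mul_affine hX hspectrum) ?_
  have haffine : p • (1 : Matrix ι ι ℂ) + q • X = diagonal fun i => ((p + q * a i : ℝ) : ℂ) := by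
    rw [hXdef, ← diagonal_one, ← diagonal_smul, ← diagonal_smul, diagonal_add]
    congr 1
    ext i
    simp
  rw [haffine, diagonal_mul_diagonal, ← diagonal_one]
  congr 1
  ext i
  rw [← Complex.ofReal_mul, mul_inv_cancel₀ (hpq i), Complex.ofReal_one]

lemma exists_dotProduct_affineInv_diagonal_eq {a : ι → ℝ} (ha : a.Injective) (ha0 : ∀ i, 0 < a i)
    {P : Polynomial ℝ} (hP : P.degree < Fintype.card ι) :
    ∃ y : ι → ℂ, ∀ s, 0 ≤ s → star y ⬝ᵥ affineInv s 1 (diagonal fun i => (a i : ℂ)) *ᵥ 1 =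
      ((P.eval s / ∏ i, (s + a i) : ℝ) : ℂ) := by
  obtain ⟨x, hx⟩ := exists_sum_mul_inv_eq ha hP
  refine ⟨fun i => x i, fun s hs => ?_⟩
  have hne : ∀ i, s + a i ≠ 0 := fun i => (add_pos_of_nonneg_of_pos hs (ha0 i)).ne'
  rw [affineInv_diagonal (by simpa only [one_mul] using hne), ← hx s hne]
  simp [dotProduct, mulVec_diagonal]

lemma exists_re_dotProduct_cfc_mobius_sub_eq {a : ι → ℝ} (ha : a.Injective) (ha0 : ∀ i, 0 < a i)
    {P : Polynomial ℝ} (hP : P.degree < Fintype.card ι) :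
    ∃ y : ι → ℂ, ∀ s, 0 ≤ s → ∃ c, 0 < c ∧
      (star y ⬝ᵥ (cfc (mobius s 1) (diagonal (fun i => (a i : ℂ)) + vecMulVec 1 (star 1)) -
        cfc (mobius s 1) (diagonal fun i => (a i : ℂ))) *ᵥ y).re = c * (s * P.eval s ^ 2) := by
  obtain ⟨y, hy⟩ := exists_dotProduct_affineInv_diagonal_eq ha ha0 hP
  refine ⟨y, fun s hs => ?_⟩
  set A : Matrix ι ι ℂ := diagonal fun i => (a i : ℂ)
  have hA : A.PosDef := .diagonal fun i => by simpa using ha0 i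
  have hB : (A + vecMulVec 1 (star 1)).PosDef :=
    hA.add_posSemidef (posSemidef_vecMulVec_self_star 1)
  have hne : ∀ {X : Matrix ι ι ℂ}, X.PosDef → ∀ t ∈ spectrum ℝ X, 0 < s + 1 * t := fun hX t ht => by
    have ht0 : 0 < t := (spectrum_subset_Ioi_zero_iff hX.isHermitian).2 hX ht
    positivity
  have hform : 0 ≤ affineInvForm s 1 A 1 :=
    (posSemidef_cfc hA.isHermitian fun t ht => (inv_pos.2 (hne hA t ht)).le).re_dotProduct_nonneg 1
  have hprod : 0 < ∏ i, (s + a i) :=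
    Finset.prod_pos fun i _ => add_pos_of_nonneg_of_pos hs (ha0 i)
  refine ⟨((1 + affineInvForm s 1 A 1) * (∏ i, (s + a i)) ^ 2)⁻¹, by positivity, ?_⟩
  rw [re_dotProduct_cfc_mobius_add_vecMulVec_sub hA.isHermitian (fun t ht => (hne hA t ht).ne')
    (fun t ht => (hne hB t ht).ne'), hy s hs, Complex.norm_real, Real.norm_eq_abs, sq_abs, one_mul,
    div_pow, div_mul_div_comm, inv_mul_eq_div]

theorem not_matrixMonotoneOn_sum_mobius_sub {n : ℕ} {J : Finset κ} {s : κ → ℝ} {ε σ : ℝ}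
    (hs0 : ∀ j ∈ J, 0 ≤ s j) (hσ : 0 < σ) (hsσ : ∀ j ∈ J, s j ≠ σ)
    (hcard : (J.filter fun j => s j ≠ 0).card < n) (hε : 0 < ε) :
    ¬ MatrixMonotoneOn n (fun t => ∑ j ∈ J, mobius (s j) 1 t - ε * mobius σ 1 t) (Ioi 0) := by
  intro hmono
  set a : Fin n → ℝ := fun i => i + 1
  have ha : a.Injective := fun i j h => by simpa [a, Fin.ext_iff] using h
  have ha0 : ∀ i, 0 < a i := fun i => by positivity
  set P : Polynomial ℝ := ∏ j ∈ J with s j ≠ 0, (Polynomial.X - Polynomial.C (s j)) with hP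
  have hdeg : P.degree < Fintype.card (Fin n) := by simpa [hP, Polynomial.degree_prod] using hcard
  obtain ⟨y, hy⟩ := exists_re_dotProduct_cfc_mobius_sub_eq ha ha0 hdeg
  set A : Matrix (Fin n) (Fin n) ℂ := diagonal fun i => (a i : ℂ)
  set B := A + vecMulVec 1 (star 1) with hBdef
  have hA : A.PosDef := .diagonal fun i => by simpa using ha0 i
  have hB : B.PosDef := hA.add_posSemidef (posSemidef_vecMulVec_self_star 1)
  have hAB : (B - A).PosSemidef := by
    simpa only [hBdef, add_sub_cancel_left] using posSemidef_vecMulVec_self_star 1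
  have hgapJ : ∀ j ∈ J,
      (star y ⬝ᵥ (cfc (mobius (s j) 1) B - cfc (mobius (s j) 1) A) *ᵥ y).re = 0 := fun j hj => by
    have hroot : s j * P.eval (s j) ^ 2 = 0 := by
      by_cases hj0 : s j = 0
      · rw [hj0, zero_mul]
      · rw [hP, Polynomial.eval_prod, Finset.prod_eq_zero (Finset.mem_filter.2 ⟨hj, hj0⟩) (by simp),
          zero_pow two_ne_zero, mul_zero]
    obtain ⟨c, -, hc⟩ := hy (s j) (hs0 j hj)
    rw [hc, hroot, mul_zero]
  have hgapσ : 0 < (star y ⬝ᵥ (cfc (mobius σ 1) B - cfc (mobius σ 1) A) *ᵥ y).re := by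
    have hPσ : P.eval σ ≠ 0 := by
      rw [hP, Polynomial.eval_prod, Finset.prod_ne_zero_iff]
      exact fun j hj => by simpa [sub_eq_zero] using (hsσ j (Finset.mem_filter.1 hj).1).symm
    obtain ⟨c, hc0, hc⟩ := hy σ hσ.le
    rw [hc]
    positivity
  have hgap := (hmono A B hA.isHermitian hB.isHermitian
    ((spectrum_subset_Ioi_zero_iff hA.isHermitian).2 hA)
    ((spectrum_subset_Ioi_zero_iff hB.isHermitian).2 hB) hAB).re_dotProduct_nonneg y
  rw [RCLike.re_eq_complex_re, re_dotProduct_cfc_sum_sub_const_mul_gap, Finset.sum_eq_zero hgapJ,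
    zero_sub] at hgap
  exact absurd hgap (neg_neg_of_pos (mul_pos hε hgapσ)).not_ge

end Violation

section Interpolation

/-- The `2 * n` points are the eigenvalues of a pair of matrices violating monotonicity. -/
lemma exists_forall_eq_not_matrixMonotoneOn {n : ℕ} {g : ℝ → ℝ} {I : Set ℝ}
    (hg : ¬ MatrixMonotoneOn n g I) :
    ∃ μ : Fin (2 * n) → ℝ, (∀ i, μ i ∈ I) ∧
      ∀ g' : ℝ → ℝ, (∀ i, g' (μ i) = g (μ i)) → ¬ MatrixMonotoneOn n g' I := by
  unfold MatrixMonotoneOn at hg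
  push Not at hg
  obtain ⟨A, B, hA, hB, hAI, hBI, hAB, hgAB⟩ := hg
  set e : Fin (2 * n) ≃ Fin n ⊕ Fin n := (finCongr (two_mul n)).trans finSumFinEquiv.symm
  have hrange : range (Sum.elim hA.eigenvalues hB.eigenvalues ∘ e) =
      spectrum ℝ A ∪ spectrum ℝ B := by
    rw [e.surjective.range_comp, Sum.elim_range, hA.spectrum_real_eq_range_eigenvalues,
      hB.spectrum_real_eq_range_eigenvalues]
  refine ⟨Sum.elim hA.eigenvalues hB.eigenvalues ∘ e,
    range_subset_iff.1 (hrange ▸ union_subset hAI hBI), fun g' hg' hmono => hgAB ?_⟩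
  have heq : (spectrum ℝ A ∪ spectrum ℝ B).EqOn g g' := by
    rw [← hrange]
    rintro _ ⟨i, rfl⟩
    exact (hg' i).symm
  rw [cfc_congr (heq.mono subset_union_left), cfc_congr (heq.mono subset_union_right)]
  exact hmono A B hA hB hAI hBI hAB

theorem exists_points_forall_ne_of_not_matrixMonotoneOn_mul_comp_inv {n : ℕ} {f : ℝ → ℝ}
    (hf : ¬ MatrixMonotoneOn n (fun t => t * f t⁻¹) (Ioi 0)) :
    ∃ lam : Fin (2 * n) → ℝ, (∀ i, lam i ∈ Ioi (0 : ℝ)) ∧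
      ¬ ∃ h : ℝ → ℝ, MatrixMonotoneOn (2 * n) h (Ioi (0 : ℝ)) ∧
        h '' Ioi (0 : ℝ) ⊆ Ioi (0 : ℝ) ∧ ∀ i, h (lam i) = f (lam i) := by
  obtain ⟨μ, hμ, hviolation⟩ := exists_forall_eq_not_matrixMonotoneOn hf
  refine ⟨fun i => (μ i)⁻¹, fun i => mem_Ioi.2 (inv_pos.2 (hμ i)), ?_⟩
  rintro ⟨h, hmono, hpos, hinterp⟩
  have h0 : ∀ t, 0 < t → 0 ≤ h t := fun t ht => (hpos (mem_image_of_mem h ht)).le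
  exact hviolation (fun t => t * h t⁻¹) (fun i => by rw [hinterp]) (hmono.mul_comp_inv h0)

end Interpolation

section Existence

lemma mul_mobius_inv (p q t : ℝ) : t * mobius p q t⁻¹ = mobius q p t := by
  rcases eq_or_ne t 0 with rfl | ht
  · simp [mobius]
  · have h : p + q * t⁻¹ = (q + p * t) / t := by field_simp; ring
    rw [mobius, mobius, h, div_div_eq_mul_div, inv_mul_cancel₀ ht, mul_one_div]

lemma continuousOn_mobius_one {q : ℝ} (hq : 0 ≤ q) : ContinuousOn (mobius 1 q) (Ici 0) :=
  continuousOn_id.div (by fun_prop) fun t ht => by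
    have ht0 : 0 ≤ t := ht
    positivity

lemma mobius_one_pos {q t : ℝ} (hq : 0 ≤ q) (ht : 0 < t) : 0 < mobius 1 q t := by
  rw [mobius]
  positivity

lemma mobius_one_anti {q r t : ℝ} (hq : 0 ≤ q) (hqr : q ≤ r) (ht : 0 ≤ t) :
    mobius 1 r t ≤ mobius 1 q t :=
  div_le_div_of_nonneg_left ht (by positivity) (by gcongr)

variable {κ : Type*} {J : Finset κ} {s : κ → ℝ} {ε σ : ℝ}

lemma continuousOn_mobiusPerturbation (hs0 : ∀ j ∈ J, 0 ≤ s j) (hσ : 0 ≤ σ) :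
    ContinuousOn (mobiusPerturbation J s ε σ) (Ici 0) :=
  (continuousOn_finsetSum J fun j hj => continuousOn_mobius_one (hs0 j hj)).sub
    (continuousOn_const.mul (continuousOn_mobius_one hσ))

lemma mobiusPerturbation_pos (hJ : J.Nonempty) (hs0 : ∀ j ∈ J, 0 ≤ s j) (hsσ : ∀ j ∈ J, s j ≤ σ)
    (hε : ε < 1) {t : ℝ} (ht : 0 < t) : 0 < mobiusPerturbation J s ε σ t := by
  obtain ⟨j, hj⟩ := hJ
  rw [mobiusPerturbation, sub_pos]
  calc ε * mobius 1 σ t < mobius 1 σ t :=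
        mul_lt_of_lt_one_left (mobius_one_pos ((hs0 j hj).trans (hsσ j hj)) ht) hε
    _ ≤ mobius 1 (s j) t := mobius_one_anti (hs0 j hj) (hsσ j hj) ht.le
    _ ≤ ∑ j ∈ J, mobius 1 (s j) t :=
        Finset.single_le_sum (fun k hk => (mobius_one_pos (hs0 k hk) ht).le) hj

lemma mul_mobiusPerturbation_inv (J : Finset κ) (s : κ → ℝ) (ε σ t : ℝ) :
    t * mobiusPerturbation J s ε σ t⁻¹ =
      ∑ j ∈ J, mobius (s j) 1 t - ε * mobius σ 1 t := by
  rw [mobiusPerturbation, mul_sub, Finset.mul_sum, mul_left_comm, mul_mobius_inv]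
  simp only [mul_mobius_inv]

lemma exists_pos_lt_one_mul_le_one {C : ℝ} (hC : 0 ≤ C) : ∃ ε : ℝ, 0 < ε ∧ ε < 1 ∧ ε * C ≤ 1 :=
  ⟨(2 + C)⁻¹, by positivity, inv_lt_one_of_one_lt₀ (by linarith),
    by rw [inv_mul_le_one₀ (by positivity)]; linarith⟩

end Existence

theorem stmt_4_general (n : ℕ) (hn : 1 ≤ n) :
    ∃ f : ℝ → ℝ,
      ContinuousOn f (Ici (0 : ℝ)) ∧ f '' Ioi (0 : ℝ) ⊆ Ioi (0 : ℝ) ∧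
      MatrixMonotoneOn n f (Ici (0 : ℝ)) ∧
      ∃ lam : Fin (2 * n) → ℝ, (∀ i, lam i ∈ Ioi (0 : ℝ)) ∧
        ¬ ∃ h : ℝ → ℝ, MatrixMonotoneOn (2 * n) h (Ioi (0 : ℝ)) ∧
          h '' Ioi (0 : ℝ) ⊆ Ioi (0 : ℝ) ∧ ∀ i, h (lam i) = f (lam i) := by
  set J := Finset.range n
  set s : ℕ → ℝ := fun j => j
  have hs0 : ∀ j ∈ J, 0 ≤ s j := fun j _ => j.cast_nonneg
  have hsn : ∀ j ∈ J, s j < n := fun j hj => by simpa [J, s] using hj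
  have hsn' : ∀ j ∈ J, s j ≤ n := fun j hj => (hsn j hj).le
  have h0 : 0 ∈ J := Finset.mem_range.2 hn
  have hn0 : (0 : ℝ) < n := by exact_mod_cast hn
  obtain ⟨ε, hε0, hε1, hεJ⟩ := exists_pos_lt_one_mul_le_one (C :=
    ∑ j ∈ J, (Lagrange.basis J s j).eval (n : ℝ) ^ 2) (Finset.sum_nonneg fun j _ => sq_nonneg _)
  refine ⟨mobiusPerturbation J s ε n, continuousOn_mobiusPerturbation hs0 hn0.le,
    image_subset_iff.2 fun t ht => mobiusPerturbation_pos ⟨0, h0⟩ hs0 hsn' hε1 ht,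
    matrixMonotoneOn_mobiusPerturbation Nat.cast_injective.injOn hs0 hsn' hn0.le (by simp [J])
      hε0.le hεJ,
    exists_points_forall_ne_of_not_matrixMonotoneOn_mul_comp_inv ?_⟩
  have hcard : (J.filter fun j => s j ≠ 0).card < n :=
    (Finset.card_lt_card (Finset.filter_ssubset.2 ⟨0, h0, by simp [s]⟩)).trans_eq
      (Finset.card_range n)
  simpa only [mul_mobiusPerturbation_inv] using
    not_matrixMonotoneOn_sum_mobius_sub hs0 hn0 (fun j hj => (hsn j hj).ne) hcard hε0

/-- Proposition 2.3: `C_{2n}([0,∞)) ⊊ Pₙ⁺([0,∞))`. For each `n ≥ 1` there is a continuous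
function `f` on `[0,∞)`, positive on `(0,∞)` and matrix monotone of order `n` there, together
with `2n` points of `(0,∞)` at which no positive operator monotone function on `(0,∞)`
interpolates `f`. -/
theorem stmt_4 (n : ℕ) (hn : 1 ≤ n) :
    ∃ f : ℝ → ℝ, ContinuousOn f (Ici (0:ℝ)) ∧ f '' Ioi (0:ℝ) ⊆ Ioi (0:ℝ) ∧
      MatrixMonotoneOn n f (Ici (0:ℝ)) ∧
      ∃ lam : Fin (2 * n) → ℝ, (∀ i, lam i ∈ Ioi (0:ℝ)) ∧
        ¬ ∃ h : ℝ → ℝ, (∀ k : ℕ, MatrixMonotoneOn k h (Ioi (0:ℝ))) ∧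
          h '' Ioi (0:ℝ) ⊆ Ioi (0:ℝ) ∧ ∀ i, h (lam i) = f (lam i) := by
  obtain ⟨f, hcont, hpos, hmono, lam, hlam, hno⟩ := stmt_4_general n hn
  exact ⟨f, hcont, hpos, hmono, lam, hlam, fun ⟨h, hh, hrest⟩ => hno ⟨h, hh (2 * n), hrest⟩⟩
end
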